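/- arXiv:1205.4803 — 3 statements merged into one kernel-verified Lean document; each statement's English description precedes it below -/
import Mathlib

section
/- For every τ in the complex upper half-plane, with q = e^{2πiτ}, the identity η(4τ)⁶ = Σ_{m,n∈ℤ} ((m² − 4n²)/2) · q^{m²+4n²} holds, where the double series converges absolutely. -/
/-!
Both sides are the square of Jacobi's identity for the cube of the Euler product
`E(Q) = ∏_{n ≥ 1} (1 - Qⁿ)`,
  `2 E(r²)³ = ∑_{i ∈ ℤ} (-1)^i (2i + 1) r^{i(i+1)}`  (`hasSum_jacobi_cube`).
With `r = q²`, squaring and multiplying by `q` gives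
  `4 η(4τ)⁶ = ∑_{i,j ∈ ℤ} (-1)^{i+j} (2i + 1)(2j + 1) q^{2i(i+1) + 2j(j+1) + 1}`.
Put `m = i + j + 1` and `k = i - j`: the summand becomes `± (m² - k²) q^{m² + k²}`, with sign `+`
for `m` odd and `k` even, and sign `-` for `m` even and `k` odd. The two cases give the same sum
over an odd and an even integer (`hasSum_jacobi_sq_of_odd`), namely twice the part of the theta
series with `m` odd; the part with `m` even cancels by symmetry (`hasSum_theta_of_odd`).

Jacobi's identity is obtained from a finite version (`hasSum_jacobiCoeff`),
  `∑_{i ∈ ℤ} (-1)^i r^{i(i+1)} [2n+1 choose n-i] (2i + 1) = 2 ∏_{k=1}^{n} (1 - r^{2k})²`,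
with Gaussian binomials in base `r²`, by dominated convergence as `n → ∞`. The finite version is
proved by induction on `n` from the recurrence `jacobiCoeff_succ`.
-/

/-- The Dedekind eta function `η(τ) = q^{1/24} ∏_{n ≥ 1} (1 - qⁿ)`, `q = e^{2πiτ}`. -/
noncomputable def dedekindEta (τ : ℂ) : ℂ :=
  Complex.exp (2 * (Real.pi : ℂ) * Complex.I * τ / 24) *
    ∏' n : ℕ, (1 - Complex.exp (2 * (Real.pi : ℂ) * Complex.I * τ) ^ (n + 1))

/-! ### Reciprocals of partial Euler products -/

/-- The partial product `∏_{k=1}^{n} (1 - r^{2k})`. -/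
noncomputable def partialEuler (r : ℂ) (n : ℕ) : ℂ :=
  ∏ k ∈ Finset.range n, (1 - (r ^ 2) ^ (k + 1))

/-- The reciprocal `1 / ∏_{k=1}^{m} (1 - r^{2k})` of the partial product, extended by `0` to
negative `m`; this extension keeps the recurrence `invEuler_sub_one` valid at every integer. -/
noncomputable def invEuler (r : ℂ) (m : ℤ) : ℂ :=
  if 0 ≤ m then (partialEuler r m.toNat)⁻¹ else 0

lemma one_sub_sq_pow_ne_zero {r : ℂ} (hr : ‖r‖ < 1) (k : ℕ) : 1 - (r ^ 2) ^ (k + 1) ≠ 0 := by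
  intro h
  have h1 : ‖(r ^ 2) ^ (k + 1)‖ = 1 := by rw [← sub_eq_zero.mp h]; simp
  rw [← pow_mul, norm_pow] at h1
  exact (pow_lt_one₀ (norm_nonneg r) hr (by omega)).ne h1

lemma partialEuler_ne_zero {r : ℂ} (hr : ‖r‖ < 1) (n : ℕ) : partialEuler r n ≠ 0 :=
  Finset.prod_ne_zero_iff.mpr fun k _ => one_sub_sq_pow_ne_zero hr k

lemma partialEuler_succ (r : ℂ) (n : ℕ) :
    partialEuler r (n + 1) = partialEuler r n * (1 - (r ^ 2) ^ (n + 1)) :=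
  Finset.prod_range_succ _ _

lemma invEuler_sub_one {r : ℂ} (hr : ‖r‖ < 1) (m : ℤ) :
    invEuler r (m - 1) = (1 - r ^ (2 * m)) * invEuler r m := by
  rcases lt_trichotomy m 0 with h | rfl | h
  · simp [invEuler, show ¬ (0 ≤ m) by omega, show ¬ (1 ≤ m) by omega]
  · simp [invEuler]
  · obtain ⟨k, rfl⟩ : ∃ k : ℕ, m = k + 1 := ⟨(m - 1).toNat, by omega⟩
    have e : r ^ (2 * ((k : ℤ) + 1)) = (r ^ 2) ^ (k + 1) := by
      rw [← pow_mul]; norm_cast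
    have h1 := one_sub_sq_pow_ne_zero hr k
    have h2 := partialEuler_ne_zero hr k
    have h3 : ((k : ℤ) + 1).toNat = k + 1 := by omega
    simp only [invEuler, e, h3, add_sub_cancel_right, Int.toNat_natCast, partialEuler_succ]
    rw [if_pos (by omega), if_pos (by omega)]
    field_simp

/-! ### The finite Jacobi identity -/

/-- The coefficient `(-1)^i r^{i(i+1)} [2n+1 choose n-i]` (a Gaussian binomial in base `r²`) of the
finite Jacobi identity; it vanishes unless `-n-1 ≤ i ≤ n`. -/
noncomputable def jacobiCoeff (r : ℂ) (n : ℕ) (i : ℤ) : ℂ :=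
  (-1) ^ i * r ^ (i * (i + 1)) *
    (partialEuler r (2 * n + 1) * invEuler r (n - i) * invEuler r (n + 1 + i))

/-- The Laurent polynomial in `z` with coefficients `jacobiCoeff r (n + 1)` is
`(1 - z r^{2n+2}) (1 - z⁻¹ r^{2n+2})` times the one with coefficients `jacobiCoeff r n`. -/
lemma jacobiCoeff_succ {r : ℂ} (hr : ‖r‖ < 1) (h0 : r ≠ 0) (n : ℕ) (i : ℤ) :
    jacobiCoeff r (n + 1) i = (1 + r ^ (4 * n + 4)) * jacobiCoeff r n i
      - r ^ (2 * n + 2) * (jacobiCoeff r n (i - 1) + jacobiCoeff r n (i + 1)) := by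
  set A := invEuler r (n + 1 - i) with hA
  set B := invEuler r (n + 2 + i) with hB
  set X := r ^ (2 * ((n : ℤ) + 1 - i)) with hX
  set Y := r ^ (2 * ((n : ℤ) + 1 + i)) with hY
  have hY2 : r ^ (2 * ((n : ℤ) + 2 + i)) = Y * r ^ 2 := by
    rw [hY, ← zpow_natCast, ← zpow_add₀ h0]; congr 1; push_cast; ring
  have hX2 : r ^ (2 * ((n : ℤ) - i)) * r ^ 2 = X := by
    rw [hX, ← zpow_natCast, ← zpow_add₀ h0]; congr 1; push_cast; ring
  have hXY : X * Y = r ^ (4 * n + 4) := by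
    rw [hX, hY, ← zpow_natCast, ← zpow_add₀ h0]; congr 1; push_cast; ring
  have a1 : invEuler r (n - i) = (1 - X) * A := by
    rw [hA, hX, ← invEuler_sub_one hr]; congr 1; ring
  have a2 : invEuler r (n - (i + 1)) = (1 - r ^ (2 * ((n : ℤ) - i))) * ((1 - X) * A) := by
    rw [← a1, ← invEuler_sub_one hr]; congr 1; ring
  have b1 : invEuler r (n + 1 + i) = (1 - Y * r ^ 2) * B := by
    rw [hB, ← hY2, ← invEuler_sub_one hr]; congr 1; ring
  have b2 : invEuler r (n + 1 + (i - 1)) = (1 - Y) * ((1 - Y * r ^ 2) * B) := by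
    rw [← b1, hY, ← invEuler_sub_one hr]; congr 1; ring
  have e1 : r ^ (2 * n + 2) * r ^ ((i - 1) * (i - 1 + 1)) = X * r ^ (i * (i + 1)) := by
    rw [hX, ← zpow_natCast, ← zpow_add₀ h0, ← zpow_add₀ h0]; congr 1; push_cast; ring
  have e2 : r ^ (2 * n + 2) * r ^ ((i + 1) * (i + 1 + 1)) = Y * r ^ 2 * r ^ (i * (i + 1)) := by
    rw [hY, ← zpow_natCast, ← zpow_natCast, ← zpow_add₀ h0, ← zpow_add₀ h0, ← zpow_add₀ h0]
    congr 1; push_cast; ring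
  have s1 : (-1 : ℂ) ^ (i - 1) = -(-1) ^ i := by
    rw [zpow_sub₀ (by norm_num), zpow_one, div_neg, div_one]
  have s2 : (-1 : ℂ) ^ (i + 1) = -(-1) ^ i := by
    rw [zpow_add₀ (by norm_num)]; norm_num
  have p : partialEuler r (2 * (n + 1) + 1) =
      partialEuler r (2 * n + 1) * (1 - X * Y) * (1 - X * Y * r ^ 2) := by
    rw [show 2 * (n + 1) + 1 = 2 * n + 1 + 1 + 1 by ring, partialEuler_succ, partialEuler_succ, hXY]
    ring
  have c1 : invEuler r (((n + 1 : ℕ) : ℤ) - i) = A := by push_cast; rfl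
  have c2 : invEuler r (((n + 1 : ℕ) : ℤ) + 1 + i) = B := by
    rw [hB]; congr 1
  have c3 : invEuler r ((n : ℤ) - (i - 1)) = A := by rw [hA]; congr 1; ring
  have c4 : invEuler r ((n : ℤ) + 1 + (i + 1)) = B := by rw [hB]; congr 1; ring
  simp only [jacobiCoeff, c1, c2, c3, c4, a1, a2, b1, b2, p, s1, s2, ← hXY]
  set S := (-1 : ℂ) ^ i
  set R := r ^ (i * (i + 1))
  set Q := partialEuler r (2 * n + 1)
  set x := r ^ (2 * ((n : ℤ) - i))
  rw [← hX2] at e1 ⊢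
  linear_combination (-(S * Q * A * (1 - Y) * ((1 - Y * r ^ 2) * B))) * e1
    - (S * Q * B * (1 - x) * ((1 - x * r ^ 2) * A)) * e2

lemma hasSum_shift_add {f : ℤ → ℂ} {a : ℂ} (h : HasSum f a) : HasSum (fun i => f (i + 1)) a := by
  have h1 : HasSum (f ∘ Equiv.addRight (1 : ℤ)) a := (Equiv.hasSum_iff _).mpr h
  exact h1.congr_fun fun i => by rw [Function.comp, Equiv.coe_addRight]

lemma hasSum_shift_sub {f : ℤ → ℂ} {a : ℂ} (h : HasSum f a) : HasSum (fun i => f (i - 1)) a := by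
  have h1 : HasSum (f ∘ Equiv.subRight (1 : ℤ)) a := (Equiv.hasSum_iff _).mpr h
  exact h1.congr_fun fun i => by rw [Function.comp, Equiv.subRight_apply]

/-- The finite form of Jacobi's identity. As `i ↦ 2i + 1` is affine, the contributions of the shifts
by `1` and `-1` in `jacobiCoeff_succ` to the weighted sum add up to twice that sum, so that passing
from `n` to `n + 1` multiplies it by `(1 - r^{2n+2})²`. The first conjunct, convergence of the
unweighted sum, is what lets the shifted series be split. -/
lemma hasSum_jacobiCoeff {r : ℂ} (hr : ‖r‖ < 1) (h0 : r ≠ 0) (n : ℕ) :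
    (∃ a, HasSum (jacobiCoeff r n) a) ∧
      HasSum (fun i : ℤ => jacobiCoeff r n i * (2 * i + 1)) (2 * partialEuler r n ^ 2) := by
  induction n with
  | zero =>
    have hz : ∀ i : ℤ, i ∉ ({0, -1} : Finset ℤ) → jacobiCoeff r 0 i = 0 := by
      intro i hi
      simp only [Finset.mem_insert, Finset.mem_singleton, not_or] at hi
      rcases lt_or_gt_of_ne hi.1 with h | h
      · have : ¬ (0 ≤ 1 + i) := by omega
        simp [jacobiCoeff, invEuler, this]
      · have : ¬ (i ≤ 0) := by omega
        simp [jacobiCoeff, invEuler, this]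
    have h1 : (1 : ℂ) - r ^ 2 ≠ 0 := by simpa using one_sub_sq_pow_ne_zero hr 0
    refine ⟨⟨_, hasSum_sum_of_ne_finset_zero hz⟩, ?_⟩
    -- Only `i = 0` and `i = -1` contribute, each with `1`.
    have key := hasSum_sum_of_ne_finset_zero (L := SummationFilter.unconditional ℤ) (s := {0, -1})
      (f := fun i : ℤ => jacobiCoeff r 0 i * (2 * i + 1)) (fun i hi => by simp [hz i hi])
    convert key using 1
    simp [jacobiCoeff, invEuler, partialEuler, h1]
  | succ n ih =>
    obtain ⟨⟨a, ha⟩, hs⟩ := ih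
    have am : HasSum (fun i : ℤ => jacobiCoeff r n (i - 1)) a :=
      hasSum_shift_sub ha
    have ap : HasSum (fun i : ℤ => jacobiCoeff r n (i + 1)) a :=
      hasSum_shift_add ha
    have sm := hasSum_shift_sub hs
    have sp := hasSum_shift_add hs
    refine ⟨⟨_, ((ha.mul_left (1 + r ^ (4 * n + 4))).sub
      ((am.add ap).mul_left (r ^ (2 * n + 2)))).congr_fun ?_⟩, ?_⟩
    · exact fun i => jacobiCoeff_succ hr h0 n i
    · have key := (hs.mul_left (1 + r ^ (4 * n + 4))).sub
        (((sm.add (am.mul_left 2)).add (sp.sub (ap.mul_left 2))).mul_left (r ^ (2 * n + 2)))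
      have hv : 2 * partialEuler r (n + 1) ^ 2 = (1 + r ^ (4 * n + 4)) * (2 * partialEuler r n ^ 2) -
          r ^ (2 * n + 2) * (2 * partialEuler r n ^ 2 + 2 * a +
            (2 * partialEuler r n ^ 2 - 2 * a)) := by
        rw [partialEuler_succ]
        ring
      rw [hv]
      refine key.congr_fun fun i => ?_
      rw [jacobiCoeff_succ hr h0]
      push_cast
      ring

/-! ### Convergence of products and theta series -/

open Filter Topology in
lemma tendsto_partialEuler {r : ℂ} (hr : ‖r‖ < 1) :
    Tendsto (partialEuler r) atTop (𝓝 (∏' n : ℕ, (1 - (r ^ 2) ^ (n + 1)))) :=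
  (ModularForm.multipliable_one_sub_pow (q := r ^ 2)
    (by rw [norm_pow]; exact pow_lt_one₀ (norm_nonneg r) hr two_ne_zero)).tendsto_prod_tprod_nat

lemma tprod_one_sub_sq_pow_ne_zero {r : ℂ} (hr : ‖r‖ < 1) :
    ∏' n : ℕ, (1 - (r ^ 2) ^ (n + 1)) ≠ 0 := by
  simp_rw [sub_eq_add_neg]
  refine tprod_one_add_ne_zero_of_summable (f := fun n : ℕ => -(r ^ 2) ^ (n + 1))
    (fun i => by simpa [sub_eq_add_neg] using one_sub_sq_pow_ne_zero hr i) ?_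
  simp only [norm_neg, norm_pow]
  exact (summable_nat_add_iff 1).mpr (summable_geometric_of_lt_one (by positivity)
    (pow_lt_one₀ (norm_nonneg r) hr two_ne_zero))

lemma summable_pow_mul_pow_of_le {x : ℝ} (hx0 : 0 ≤ x) (hx : x < 1) (k : ℕ) {e : ℕ → ℕ}
    (he : ∀ n, n ≤ e n) : Summable fun n : ℕ => (n : ℝ) ^ k * x ^ e n := by
  refine Summable.of_nonneg_of_le (fun n => by positivity) (fun n => ?_)
    (summable_pow_mul_geometric_of_norm_lt_one k (r := x) (by rwa [Real.norm_of_nonneg hx0]))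
  exact mul_le_mul_of_nonneg_left (pow_le_pow_of_le_one hx0 hx.le (he n)) (by positivity)

lemma summable_norm_odd_mul {r : ℂ} (hr : ‖r‖ < 1) :
    Summable fun i : ℤ => ‖(2 * (i : ℂ) + 1) * r ^ (i * (i + 1))‖ := by
  have key : Summable fun n : ℕ => ‖(2 * (n : ℂ) + 1) * r ^ (n * (n + 1))‖ := by
    have h0 := summable_pow_mul_pow_of_le (norm_nonneg r) hr 0 (e := fun n => n * (n + 1))
      (fun n => Nat.le_mul_of_pos_right _ (by omega))
    have h1 := summable_pow_mul_pow_of_le (norm_nonneg r) hr 1 (e := fun n => n * (n + 1))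
      (fun n => Nat.le_mul_of_pos_right _ (by omega))
    refine ((h1.mul_left 2).add h0).congr fun n => ?_
    have : ‖2 * (n : ℂ) + 1‖ = 2 * n + 1 := by
      rw [show 2 * (n : ℂ) + 1 = ((2 * n + 1 : ℕ) : ℂ) by push_cast; ring, Complex.norm_natCast]
      push_cast; ring
    rw [norm_mul, norm_pow, this]
    ring
  refine Summable.of_nat_of_neg_add_one (key.congr fun n => ?_) (key.congr fun n => ?_)
  · norm_cast
  · rw [show (-((n : ℤ) + 1)) * (-(n + 1) + 1) = ((n * (n + 1) : ℕ) : ℤ) by push_cast; ring,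
      zpow_natCast, norm_mul, norm_mul, ← norm_neg (2 * (n : ℂ) + 1)]
    congr 2
    push_cast; ring

lemma summable_norm_pow_mul_sq {r : ℂ} (hr : ‖r‖ < 1) (k : ℕ) :
    Summable fun i : ℤ => ‖(i : ℂ) ^ k * r ^ (i ^ 2)‖ := by
  have key : Summable fun n : ℕ => ‖(n : ℂ) ^ k * r ^ (n ^ 2)‖ :=
    (summable_pow_mul_pow_of_le (norm_nonneg r) hr k (e := fun n => n ^ 2)
      (fun n => Nat.le_self_pow two_ne_zero n)).congr fun n => by simp
  refine Summable.of_nat_of_neg (key.congr fun n => by norm_cast) (key.congr fun n => ?_)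
  rw [neg_sq]
  simp only [norm_mul, norm_pow, Int.cast_neg, norm_neg, Int.cast_natCast, norm_zpow]
  norm_cast

/-! ### Jacobi's identity -/

open Filter Topology in
/-- Jacobi's identity for the cube of the Euler product, as a sum over all integers: `i` and
`-1 - i` contribute equally, whence the factor `2`. -/
lemma hasSum_jacobi_cube {r : ℂ} (hr : ‖r‖ < 1) (h0 : r ≠ 0) :
    HasSum (fun i : ℤ => (-1) ^ i * ((2 * (i : ℂ) + 1) * r ^ (i * (i + 1))))
      (2 * (∏' n : ℕ, (1 - (r ^ 2) ^ (n + 1))) ^ 3) := by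
  set E := ∏' n : ℕ, (1 - (r ^ 2) ^ (n + 1)) with hE
  have hE0 : E ≠ 0 := tprod_one_sub_sq_pow_ne_zero hr
  have hP : Tendsto (partialEuler r) atTop (𝓝 E) := tendsto_partialEuler hr
  have hPi : Tendsto (fun n => (partialEuler r n)⁻¹) atTop (𝓝 E⁻¹) := hP.inv₀ hE0
  obtain ⟨C, hC⟩ := (Metric.isBounded_range_of_tendsto _ hP).exists_norm_le
  obtain ⟨C', hC'⟩ := (Metric.isBounded_range_of_tendsto _ hPi).exists_norm_le
  have hC0 : 0 ≤ C := (norm_nonneg _).trans (hC _ ⟨0, rfl⟩)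
  have hC'0 : 0 ≤ C' := (norm_nonneg _).trans (hC' _ ⟨0, rfl⟩)
  have hu : ∀ m, ‖invEuler r m‖ ≤ C' := by
    intro m
    unfold invEuler
    split_ifs
    · exact hC' _ ⟨_, rfl⟩
    · simpa using hC'0
  have hut : Tendsto (invEuler r) atTop (𝓝 E⁻¹) := by
    have ht : Tendsto Int.toNat atTop atTop :=
      tendsto_atTop.mpr fun b => (eventually_ge_atTop (b : ℤ)).mono fun m hm => by omega
    refine (hPi.comp ht).congr' ?_
    filter_upwards [eventually_ge_atTop 0] with m hm
    simp [invEuler, hm]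
  -- The bound for `jacobiCoeff r n i`: a constant times `|r|^(i(i+1))`, uniformly in `n`.
  have hsum := (summable_norm_odd_mul hr).mul_left (C * C' * C')
  have hlim := tendsto_tsum_of_dominated_convergence (𝓕 := atTop)
    (f := fun (n : ℕ) (i : ℤ) => jacobiCoeff r n i * (2 * (i : ℂ) + 1))
    (g := fun i : ℤ => (-1) ^ i * r ^ (i * (i + 1)) * (E * E⁻¹ * E⁻¹) * (2 * (i : ℂ) + 1))
    hsum ?_ ?_
  · simp_rw [(hasSum_jacobiCoeff hr h0 _).2.tsum_eq] at hlim
    have h2 := tendsto_nhds_unique hlim ((hP.pow 2).const_mul 2)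
    have hs : Summable (fun i : ℤ => (-1) ^ i * ((2 * (i : ℂ) + 1) * r ^ (i * (i + 1)))) :=
      Summable.of_norm ((summable_norm_odd_mul hr).congr fun i => by simp)
    have h3 : ∀ i : ℤ, (-1) ^ i * r ^ (i * (i + 1)) * (E * E⁻¹ * E⁻¹) * (2 * (i : ℂ) + 1) =
        E⁻¹ * ((-1) ^ i * ((2 * (i : ℂ) + 1) * r ^ (i * (i + 1)))) := by
      intro i
      rw [mul_inv_cancel₀ hE0]; ring
    simp_rw [h3, tsum_mul_left] at h2
    have hS := hs.hasSum
    generalize ∑' i : ℤ, (-1 : ℂ) ^ i * ((2 * (i : ℂ) + 1) * r ^ (i * (i + 1))) = S at h2 hS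
    have h4 : 2 * E ^ 3 = S := by
      field_simp at h2
      linear_combination -h2
    rwa [h4]
  · intro i
    have t1 : Tendsto (fun n : ℕ => partialEuler r (2 * n + 1)) atTop (𝓝 E) :=
      hP.comp (tendsto_atTop_mono (fun n => by simp only [id]; omega) tendsto_id)
    have t2 : Tendsto (fun n : ℕ => invEuler r ((n : ℤ) - i)) atTop (𝓝 E⁻¹) :=
      hut.comp (tendsto_atTop_add_const_right _ (-i) tendsto_natCast_atTop_atTop)
    have t3 : Tendsto (fun n : ℕ => invEuler r ((n : ℤ) + 1 + i)) atTop (𝓝 E⁻¹) :=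
      hut.comp (tendsto_atTop_add_const_right _ i
        (tendsto_atTop_add_const_right _ 1 tendsto_natCast_atTop_atTop))
    exact (((t1.mul t2).mul t3).const_mul _).mul_const _
  · refine Eventually.of_forall fun n i => ?_
    simp only [jacobiCoeff, norm_mul, norm_zpow, norm_neg, norm_one, one_zpow, one_mul]
    have hc : ‖partialEuler r (2 * n + 1)‖ * ‖invEuler r (n - i)‖ * ‖invEuler r (n + 1 + i)‖ ≤
        C * C' * C' := by
      gcongr
      · exact hC _ ⟨_, rfl⟩
      · exact hu _
      · exact hu _
    calc _ = ‖partialEuler r (2 * n + 1)‖ * ‖invEuler r (n - i)‖ * ‖invEuler r (n + 1 + i)‖ *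
          (‖2 * (i : ℂ) + 1‖ * ‖r‖ ^ (i * (i + 1))) := by ring
      _ ≤ _ := by gcongr

/-! ### Rearranging the double series -/

/-- A sum over a set partitioned into the images of two injections. -/
lemma hasSum_of_two_injective {α β : Type*} {f : β → ℂ} {e₁ e₂ : α → β} {a b : ℂ}
    (h₁ : Function.Injective e₁) (h₂ : Function.Injective e₂)
    (hc : IsCompl (Set.range e₁) (Set.range e₂))
    (ha : HasSum (f ∘ e₁) a) (hb : HasSum (f ∘ e₂) b) : HasSum f (a + b) :=
  HasSum.add_isCompl hc (h₁.hasSum_range_iff.mpr ha) (h₂.hasSum_range_iff.mpr hb)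

lemma isCompl_range_of {α β : Type*} {e₁ e₂ : α → β} (p : β → Prop)
    (h₁ : ∀ x, p (e₁ x)) (h₂ : ∀ x, ¬ p (e₂ x))
    (h : ∀ y, (∃ x, e₁ x = y) ∨ ∃ x, e₂ x = y) :
    IsCompl (Set.range e₁) (Set.range e₂) := by
  refine ⟨Set.disjoint_left.mpr ?_, codisjoint_iff.mpr (Set.eq_univ_of_forall h)⟩
  rintro _ ⟨x, rfl⟩ ⟨y, hy⟩
  exact h₂ y (hy ▸ h₁ x)

lemma summable_theta {q : ℂ} (hq : ‖q‖ < 1) (h0 : q ≠ 0) :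
    Summable (fun p : ℤ × ℤ =>
      (((p.1 : ℂ) ^ 2 - 4 * (p.2 : ℂ) ^ 2) / 2) * q ^ (p.1 ^ 2 + 4 * p.2 ^ 2)) := by
  have hq4 : ‖q ^ 4‖ < 1 := by
    rw [norm_pow]; exact pow_lt_one₀ (norm_nonneg q) hq (by norm_num)
  have h1 := summable_mul_of_summable_norm (summable_norm_pow_mul_sq hq 2)
    (summable_norm_pow_mul_sq hq4 0)
  have h2 := summable_mul_of_summable_norm (summable_norm_pow_mul_sq hq 0)
    (summable_norm_pow_mul_sq hq4 2)
  refine ((h1.mul_left (1 / 2)).sub (h2.mul_left 2)).congr fun p => ?_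
  rw [zpow_add₀ h0, zpow_mul, show q ^ (4 : ℤ) = q ^ 4 by norm_cast]
  ring

/-- The terms with `m` even cancel under `(2a, n) ↦ (2n, a)`, leaving the terms with `m` odd. -/
lemma hasSum_theta_of_odd {q u : ℂ} (hq : ‖q‖ < 1) (h0 : q ≠ 0)
    (hu : HasSum (fun p : ℤ × ℤ => ((2 * (p.1 : ℂ) + 1) ^ 2 - 4 * (p.2 : ℂ) ^ 2) / 2 *
      q ^ ((2 * p.1 + 1) ^ 2 + 4 * p.2 ^ 2)) u) :
    HasSum (fun p : ℤ × ℤ =>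
      (((p.1 : ℂ) ^ 2 - 4 * (p.2 : ℂ) ^ 2) / 2) * q ^ (p.1 ^ 2 + 4 * p.2 ^ 2)) u := by
  set f := fun p : ℤ × ℤ =>
      (((p.1 : ℂ) ^ 2 - 4 * (p.2 : ℂ) ^ 2) / 2) * q ^ (p.1 ^ 2 + 4 * p.2 ^ 2) with hf
  let e₁ : ℤ × ℤ → ℤ × ℤ := fun p => (2 * p.1, p.2)
  let e₂ : ℤ × ℤ → ℤ × ℤ := fun p => (2 * p.1 + 1, p.2)
  have i₁ : Function.Injective e₁ := by
    rintro ⟨a, b⟩ ⟨c, d⟩ h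
    simp only [e₁, Prod.mk.injEq] at h ⊢
    omega
  have i₂ : Function.Injective e₂ := by
    rintro ⟨a, b⟩ ⟨c, d⟩ h
    simp only [e₂, Prod.mk.injEq] at h ⊢
    omega
  have hc : IsCompl (Set.range e₁) (Set.range e₂) := by
    refine isCompl_range_of (fun p => p.1 % 2 = 0) (fun x => ?_) (fun x => ?_) ?_
    · simp [e₁]
    · simp only [e₂]; omega
    · rintro ⟨m, n⟩
      rcases Int.even_or_odd' m with ⟨k, rfl | rfl⟩
      · exact Or.inl ⟨(k, n), rfl⟩
      · exact Or.inr ⟨(k, n), rfl⟩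
  have he : HasSum (f ∘ e₁) 0 := by
    have hs : Summable (f ∘ e₁) := (summable_theta hq h0).comp_injective i₁
    have h1 := hs.hasSum
    have h2 : HasSum (fun p => -(f ∘ e₁) p) (∑' p, (f ∘ e₁) p) := by
      refine ((Equiv.prodComm ℤ ℤ).hasSum_iff.mpr h1).congr_fun fun p => ?_
      simp only [f, e₁, Function.comp, Equiv.prodComm_apply, Prod.swap]
      rw [show (2 * p.1) ^ 2 + 4 * p.2 ^ 2 = (2 * p.2) ^ 2 + 4 * p.1 ^ 2 by ring]
      push_cast
      ring
    have h3 := h1.neg.unique h2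
    have h4 : ∑' p, (f ∘ e₁) p = 0 := by linear_combination (-1 / 2) * h3
    rwa [h4] at h1
  have ho : HasSum (f ∘ e₂) u := by
    refine hu.congr_fun fun p => ?_
    simp only [f, e₂, Function.comp]
    push_cast
    ring
  simpa using hasSum_of_two_injective i₁ i₂ hc he ho

/-- The change of variables `m = i + j + 1`, `k = i - j`, after which `m² + k² = 2i² + 2i + 2j² +
2j + 1` and `m² - k² = (2i + 1)(2j + 1)`. Exactly one of `m`, `k` is even, and the two cases
contribute equally. -/
lemma hasSum_jacobi_sq_of_odd {q u : ℂ}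
    (hu : HasSum (fun p : ℤ × ℤ => ((2 * (p.1 : ℂ) + 1) ^ 2 - 4 * (p.2 : ℂ) ^ 2) / 2 *
      q ^ ((2 * p.1 + 1) ^ 2 + 4 * p.2 ^ 2)) u) :
    HasSum (fun p : ℤ × ℤ => (-1) ^ (p.1 + p.2) * ((2 * (p.1 : ℂ) + 1) * (2 * p.2 + 1)) *
      q ^ (2 * (p.1 * (p.1 + 1)) + 2 * (p.2 * (p.2 + 1)) + 1)) (4 * u) := by
  -- With `p = (s, n)`, these invert the change of variables at `(m, k) = (2s + 1, 2n)` and at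
  -- `(m, k) = (2n, 2s + 1)`.
  let e₁ : ℤ × ℤ → ℤ × ℤ := fun p => (p.1 + p.2, p.1 - p.2)
  let e₂ : ℤ × ℤ → ℤ × ℤ := fun p => (p.2 + p.1, p.2 - p.1 - 1)
  have i₁ : Function.Injective e₁ := by
    rintro ⟨a, b⟩ ⟨c, d⟩ h
    simp only [e₁, Prod.mk.injEq] at h ⊢
    omega
  have i₂ : Function.Injective e₂ := by
    rintro ⟨a, b⟩ ⟨c, d⟩ h
    simp only [e₂, Prod.mk.injEq] at h ⊢
    omega
  have hc : IsCompl (Set.range e₁) (Set.range e₂) := by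
    refine isCompl_range_of (fun p => (p.1 + p.2) % 2 = 0) (fun x => ?_) (fun x => ?_) ?_
    · simp only [e₁]; omega
    · simp only [e₂]; omega
    · rintro ⟨i, j⟩
      rcases Int.even_or_odd' (i + j) with ⟨k, hk | hk⟩
      · exact Or.inl ⟨(k, i - k), by simp only [e₁, Prod.mk.injEq]; omega⟩
      · exact Or.inr ⟨(i - k - 1, k + 1), by simp only [e₂, Prod.mk.injEq]; omega⟩
  rw [show 4 * u = 2 * u + 2 * u by ring]
  refine hasSum_of_two_injective i₁ i₂ hc ((hu.mul_left 2).congr_fun fun p => ?_)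
    ((hu.mul_left 2).congr_fun fun p => ?_)
  · simp only [e₁, Function.comp]
    rw [show p.1 + p.2 + (p.1 - p.2) = 2 * p.1 by ring, zpow_mul,
      show 2 * ((p.1 + p.2) * (p.1 + p.2 + 1)) + 2 * ((p.1 - p.2) * (p.1 - p.2 + 1)) + 1 =
        (2 * p.1 + 1) ^ 2 + 4 * p.2 ^ 2 by ring]
    norm_num
    ring
  · simp only [e₂, Function.comp]
    rw [show p.2 + p.1 + (p.2 - p.1 - 1) = 2 * p.2 - 1 by ring, zpow_sub₀ (by norm_num), zpow_mul,
      show 2 * ((p.2 + p.1) * (p.2 + p.1 + 1)) + 2 * ((p.2 - p.1 - 1) * (p.2 - p.1 - 1 + 1)) + 1 =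
        (2 * p.1 + 1) ^ 2 + 4 * p.2 ^ 2 by ring]
    norm_num
    ring

/-- The identity in terms of `q`: the square of Jacobi's identity in the variable `r = q²`. -/
lemma mul_tprod_pow_six_eq {q : ℂ} (hq : ‖q‖ < 1) (h0 : q ≠ 0) :
    q * (∏' n : ℕ, (1 - ((q ^ 2) ^ 2) ^ (n + 1))) ^ 6 = ∑' p : ℤ × ℤ,
      (((p.1 : ℂ) ^ 2 - 4 * (p.2 : ℂ) ^ 2) / 2) * q ^ (p.1 ^ 2 + 4 * p.2 ^ 2) := by
  have hq2 : ‖q ^ 2‖ < 1 := by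
    rw [norm_pow]; exact pow_lt_one₀ (norm_nonneg q) hq two_ne_zero
  have hj := hasSum_jacobi_cube hq2 (pow_ne_zero 2 h0)
  have hn : Summable fun i : ℤ =>
      ‖(-1) ^ i * ((2 * (i : ℂ) + 1) * (q ^ 2) ^ (i * (i + 1)))‖ := by
    refine (summable_norm_odd_mul hq2).congr fun i => ?_
    rw [norm_mul ((-1) ^ i), norm_zpow, norm_neg, norm_one, one_zpow, one_mul]
  have hm := summable_mul_of_summable_norm hn hn
  have hjj := (hj.mul hj hm).mul_left q
  -- The odd part of the theta series is a subseries of a summable family.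
  have hodd : Summable (fun p : ℤ × ℤ => ((2 * (p.1 : ℂ) + 1) ^ 2 - 4 * (p.2 : ℂ) ^ 2) / 2 *
      q ^ ((2 * p.1 + 1) ^ 2 + 4 * p.2 ^ 2)) := by
    refine ((summable_theta hq h0).comp_injective
      (i := fun p : ℤ × ℤ => (2 * p.1 + 1, p.2)) ?_).congr fun p => ?_
    · rintro ⟨a, b⟩ ⟨c, d⟩ h
      simp only [Prod.mk.injEq] at h ⊢
      omega
    · simp only [Function.comp]
      push_cast
      ring
  have h4 := hasSum_jacobi_sq_of_odd hodd.hasSum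
  have hterm : ∀ p : ℤ × ℤ, (-1) ^ (p.1 + p.2) * ((2 * (p.1 : ℂ) + 1) * (2 * p.2 + 1)) *
      q ^ (2 * (p.1 * (p.1 + 1)) + 2 * (p.2 * (p.2 + 1)) + 1) =
      q * ((-1) ^ p.1 * ((2 * (p.1 : ℂ) + 1) * (q ^ 2) ^ (p.1 * (p.1 + 1))) *
        ((-1) ^ p.2 * ((2 * (p.2 : ℂ) + 1) * (q ^ 2) ^ (p.2 * (p.2 + 1))))) := by
    intro p
    rw [zpow_add₀ h0, zpow_add₀ h0, zpow_add₀ (by norm_num : (-1 : ℂ) ≠ 0),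
      zpow_mul q 2, zpow_mul q 2, zpow_one, show q ^ (2 : ℤ) = q ^ 2 by norm_cast]
    ring
  have h5 := h4.unique (hjj.congr_fun hterm)
  rw [(hasSum_theta_of_odd hq h0 hodd.hasSum).tsum_eq]
  linear_combination (-1 / 4) * h5

theorem eta_h_theta (τ : ℂ) (hτ : 0 < τ.im) :
    Summable (fun p : ℤ × ℤ =>
      (((p.1 : ℂ) ^ 2 - 4 * (p.2 : ℂ) ^ 2) / 2) *
        Complex.exp (2 * (Real.pi : ℂ) * Complex.I * τ) ^ (p.1 ^ 2 + 4 * p.2 ^ 2)) ∧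
    dedekindEta (4 * τ) ^ 6 =
      ∑' p : ℤ × ℤ,
        (((p.1 : ℂ) ^ 2 - 4 * (p.2 : ℂ) ^ 2) / 2) *
          Complex.exp (2 * (Real.pi : ℂ) * Complex.I * τ) ^ (p.1 ^ 2 + 4 * p.2 ^ 2) := by
  have hq : ‖Complex.exp (2 * (Real.pi : ℂ) * Complex.I * τ)‖ < 1 :=
    UpperHalfPlane.norm_exp_two_pi_I_lt_one ⟨τ, hτ⟩
  have h0 := Complex.exp_ne_zero (2 * (Real.pi : ℂ) * Complex.I * τ)
  refine ⟨summable_theta hq h0, ?_⟩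
  rw [← mul_tprod_pow_six_eq hq h0]
  have e1 : Complex.exp (2 * (Real.pi : ℂ) * Complex.I * (4 * τ)) =
      (Complex.exp (2 * (Real.pi : ℂ) * Complex.I * τ) ^ 2) ^ 2 := by
    rw [← Complex.exp_nat_mul, ← Complex.exp_nat_mul]; congr 1; push_cast; ring
  have e2 : Complex.exp (2 * (Real.pi : ℂ) * Complex.I * (4 * τ) / 24) ^ 6 =
      Complex.exp (2 * (Real.pi : ℂ) * Complex.I * τ) := by
    rw [← Complex.exp_nat_mul]; congr 1; push_cast; ring
  rw [dedekindEta, mul_pow, e1, e2]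
end

section
/- For every τ in the complex upper half-plane, with q = e^{2πiτ}, the identity η(τ)²η(2τ)η(4τ)η(8τ)² = Σ_{m,n∈ℤ} ((m² − 2n²)/2) · q^{m²+2n²} holds, where the double series converges absolutely. -/
namespace EtaTheta

open Filter Topology

/-! ### The finite Jacobi triple product -/

/-- `1 / ((1 - Q)(1 - Q²)⋯(1 - Qᵏ))`, extended by `0` to negative `k`. With this convention the
coefficients `jterm` below vanish by themselves outside `|n| ≤ N`, so that finite sums can be
treated as sums over all of `ℤ`. -/
noncomputable def invP (Q : ℂ) (k : ℤ) : ℂ :=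
  if 0 ≤ k then (∏ i ∈ Finset.range k.toNat, (1 - Q ^ (i + 1)))⁻¹ else 0

lemma one_sub_pow_ne_zero {Q : ℂ} (hQ : ‖Q‖ < 1) (i : ℕ) : 1 - Q ^ (i + 1) ≠ 0 := by
  intro h
  have h1 : ‖Q ^ (i + 1)‖ = 1 := by rw [← sub_eq_zero.mp h, norm_one]
  rw [norm_pow] at h1
  exact absurd h1 (pow_lt_one₀ (norm_nonneg _) hQ (by omega)).ne

/-- The recurrence holds for every `k`: at `k = 0` both sides vanish because `1 - Q ^ 0 = 0`. -/
lemma invP_sub_one {Q : ℂ} (hQ : ‖Q‖ < 1) (k : ℤ) :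
    invP Q (k - 1) = (1 - Q ^ k) * invP Q k := by
  rcases lt_trichotomy k 0 with hk | rfl | hk
  · simp [invP, show ¬ (1 ≤ k) by omega, show ¬ (0 ≤ k) by omega]
  · simp [invP]
  · obtain ⟨j, rfl⟩ : ∃ j : ℕ, k = j + 1 := ⟨(k - 1).toNat, by omega⟩
    have h := one_sub_pow_ne_zero hQ j
    have e : (j + 1 : ℤ).toNat = j + 1 := by omega
    have e' : Q ^ ((j : ℤ) + 1) = Q ^ (j + 1) := by exact_mod_cast zpow_natCast Q (j + 1)
    simp only [invP, add_sub_cancel_right, e, e', Finset.prod_range_succ, mul_inv, Int.toNat_natCast,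
      Nat.cast_nonneg, if_true, show (0 : ℤ) ≤ j + 1 by omega]
    field_simp

/-- The `n`-th term of the finite Jacobi triple product: `(-1)ⁿ r^(n² - n) yⁿ` times the Gaussian
binomial coefficient `[2N, N + n]` in base `r²`. -/
noncomputable def jterm (r y : ℂ) (N : ℕ) (n : ℤ) : ℂ :=
  (-1) ^ n * r ^ (n ^ 2 - n) * y ^ n *
    ((∏ i ∈ Finset.range (2 * N), (1 - (r ^ 2) ^ (i + 1))) *
      invP (r ^ 2) (N - n) * invP (r ^ 2) (N + n))

/-- The recurrence which multiplying `∑ jterm r y N n` by the next factor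
`(1 - y r^(2N)) (1 - y⁻¹ r^(2N + 2))` of `F` forces on the coefficients of `yⁿ`. -/
lemma jterm_succ {r y : ℂ} (hr : ‖r‖ < 1) (hr0 : r ≠ 0) (hy : y ≠ 0) (N : ℕ) (n : ℤ) :
    jterm r y (N + 1) n = (1 + (r ^ 2) ^ (2 * N + 1)) * jterm r y N n
      - y * (r ^ 2) ^ N * jterm r y N (n - 1) - y⁻¹ * (r ^ 2) ^ (N + 1) * jterm r y N (n + 1) := by
  have hQ : ‖r ^ 2‖ < 1 := by rw [norm_pow]; exact pow_lt_one₀ (norm_nonneg _) hr (by norm_num)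
  have hQ0 : r ^ 2 ≠ 0 := pow_ne_zero _ hr0
  have h1 := invP_sub_one hQ (N + 1 - n)
  have h2 := invP_sub_one hQ (N + 1 + n)
  have h3 := invP_sub_one hQ (N - n)
  have h4 := invP_sub_one hQ (N + n)
  rw [show (N : ℤ) + 1 - n - 1 = N - n by ring] at h1
  rw [show (N : ℤ) + 1 + n - 1 = N + n by ring] at h2
  simp only [jterm]
  push_cast
  rw [show (N : ℤ) - (n - 1) = N + 1 - n by ring, show (N : ℤ) + (n - 1) = N + n - 1 by ring,
    show (N : ℤ) - (n + 1) = N - n - 1 by ring, show (N : ℤ) + (n + 1) = N + 1 + n by ring,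
    h3, h4, h1, h2, show 2 * (N + 1) = 2 * N + 1 + 1 by ring, Finset.prod_range_succ,
    Finset.prod_range_succ]
  have e1 : (r : ℂ) ^ ((n - 1) ^ 2 - (n - 1)) = r ^ (n ^ 2 - n) * ((r ^ n) ^ 2)⁻¹ * r ^ 2 := by
    rw [show (n - 1) ^ 2 - (n - 1) = (n ^ 2 - n) - n * 2 + 2 by ring, zpow_add₀ hr0, zpow_sub₀ hr0,
      zpow_mul]
    norm_cast
  have e2 : (r : ℂ) ^ ((n + 1) ^ 2 - (n + 1)) = r ^ (n ^ 2 - n) * (r ^ n) ^ 2 := by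
    rw [show (n + 1) ^ 2 - (n + 1) = (n ^ 2 - n) + n * 2 by ring, zpow_add₀ hr0, zpow_mul]
    norm_cast
  have e3 : ((r ^ 2 : ℂ)) ^ n = (r ^ n) ^ 2 := by
    rw [← zpow_natCast, ← zpow_natCast, ← zpow_mul, ← zpow_mul, mul_comm]
  rw [e1, e2]
  have f1 : (-1 : ℂ) ^ (n - 1) = - (-1) ^ n := by rw [zpow_sub_one₀ (by norm_num)]; norm_num
  have f2 : (-1 : ℂ) ^ (n + 1) = - (-1) ^ n := by rw [zpow_add_one₀ (by norm_num)]; norm_num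
  have g1 : (r ^ 2 : ℂ) ^ ((N : ℤ) - n) = (r ^ 2) ^ N * ((r ^ n) ^ 2)⁻¹ := by
    rw [zpow_sub₀ hQ0, e3, zpow_natCast, div_eq_mul_inv]
  have g2 : (r ^ 2 : ℂ) ^ ((N : ℤ) + n) = (r ^ 2) ^ N * (r ^ n) ^ 2 := by
    rw [zpow_add₀ hQ0, e3, zpow_natCast]
  have g3 : (r ^ 2 : ℂ) ^ ((N : ℤ) + 1 - n) = (r ^ 2) ^ N * r ^ 2 * ((r ^ n) ^ 2)⁻¹ := by
    rw [zpow_sub₀ hQ0, e3, zpow_add_one₀ hQ0, zpow_natCast, div_eq_mul_inv]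
  have g4 : (r ^ 2 : ℂ) ^ ((N : ℤ) + 1 + n) = (r ^ 2) ^ N * r ^ 2 * (r ^ n) ^ 2 := by
    rw [zpow_add₀ hQ0, e3, zpow_add_one₀ hQ0, zpow_natCast]
  rw [f1, f2, g1, g2, g3, g4, zpow_sub_one₀ hy, zpow_add_one₀ hy,
    show (r ^ 2) ^ (2 * N + 1) = ((r ^ 2) ^ N) ^ 2 * r ^ 2 by ring,
    show (r ^ 2) ^ (2 * N + 1 + 1) = ((r ^ 2) ^ N) ^ 2 * (r ^ 2) ^ 2 by ring,
    show (r ^ 2) ^ (N + 1) = ((r ^ 2) ^ N) * r ^ 2 by ring]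
  have hz : (r ^ n : ℂ) ≠ 0 := zpow_ne_zero _ hr0
  generalize (r ^ n : ℂ) = Z at *
  generalize (r ^ 2 : ℂ) = Q at *
  generalize Q ^ N = W at *
  generalize invP Q _ = u at *
  generalize invP Q _ = v at *
  field_simp
  ring

lemma hasSum_of_eq {ι : Type*} {f g : ι → ℂ} {a b : ℂ} (h : HasSum f a) (hf : ∀ n, g n = f n)
    (hb : b = a) : HasSum g b := by
  rw [hb, show g = f from funext hf]
  exact h

lemma hasSum_shift_sub {f : ℤ → ℂ} {a : ℂ} (h : HasSum f a) :
    HasSum (fun n => f (n - 1)) a :=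
  (Equiv.subRight (1 : ℤ)).hasSum_iff.mpr h

lemma hasSum_shift_add {f : ℤ → ℂ} {a : ℂ} (h : HasSum f a) :
    HasSum (fun n => f (n + 1)) a :=
  (Equiv.addRight (1 : ℤ)).hasSum_iff.mpr h

/-- The finite product side of the Jacobi triple product,
`∏_{i < N} (1 - y r^(2i)) (1 - y⁻¹ r^(2i + 2))`. -/
noncomputable def F (r y : ℂ) (N : ℕ) : ℂ :=
  ∏ i ∈ Finset.range N, ((1 - y * (r ^ 2) ^ i) * (1 - y⁻¹ * (r ^ 2) ^ (i + 1)))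

lemma jterm_zero (r y : ℂ) (n : ℤ) : jterm r y 0 n = if n = 0 then 1 else 0 := by
  by_cases h : n = 0
  · simp [jterm, invP, h]
  · rcases lt_or_gt_of_ne h with h' | h'
    · simp [jterm, invP, h, show ¬ (0 ≤ n) by omega]
    · simp [jterm, invP, h, show ¬ (n ≤ 0) by omega]

/-- The finite Jacobi triple product. -/
lemma hasSum_jterm {r y : ℂ} (hr : ‖r‖ < 1) (hr0 : r ≠ 0) (hy : y ≠ 0) (N : ℕ) :
    HasSum (jterm r y N) (F r y N) := by
  induction N with
  | zero =>
    have : jterm r y 0 = fun n : ℤ => if n = 0 then 1 else 0 := funext (jterm_zero r y)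
    rw [this]
    simpa [F] using hasSum_ite_eq (0 : ℤ) (1 : ℂ)
  | succ N ih =>
    have hm : HasSum (fun n : ℤ => jterm r y N (n - 1)) (F r y N) :=
      hasSum_shift_sub ih
    have hp : HasSum (fun n : ℤ => jterm r y N (n + 1)) (F r y N) :=
      hasSum_shift_add ih
    refine hasSum_of_eq (((ih.mul_left (1 + (r ^ 2) ^ (2 * N + 1))).sub
      (hm.mul_left (y * (r ^ 2) ^ N))).sub (hp.mul_left (y⁻¹ * (r ^ 2) ^ (N + 1))))
      (fun n => jterm_succ hr hr0 hy N n) ?_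
    · rw [F, Finset.prod_range_succ, ← F]
      field_simp
      ring

/-- The first moment of the finite Jacobi triple product at `y = 1`. It is the value at `y = 1` of
`y ∂F/∂y`: the factor `1 - y` of `F` vanishes there, so only its derivative contributes. -/
lemma hasSum_mul_jterm {r : ℂ} (hr : ‖r‖ < 1) (hr0 : r ≠ 0) (N : ℕ) :
    HasSum (fun n : ℤ => (n : ℂ) * jterm r 1 (N + 1) n)
      (-((∏ i ∈ Finset.range (N + 1), (1 - (r ^ 2) ^ (i + 1))) *
        ∏ i ∈ Finset.range N, (1 - (r ^ 2) ^ (i + 1)))) := by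
  -- The recurrence obeyed by the first moments. From `N = 1` on, the last summand vanishes because
  -- `F r 1 N = 0`.
  have key (N : ℕ) (D : ℂ) (ih : HasSum (fun n : ℤ => (n : ℂ) * jterm r 1 N n) D) :
      HasSum (fun n : ℤ => (n : ℂ) * jterm r 1 (N + 1) n)
        ((1 - (r ^ 2) ^ N) * (1 - (r ^ 2) ^ (N + 1)) * D
          + ((r ^ 2) ^ (N + 1) - (r ^ 2) ^ N) * F r 1 N) := by
    have h0 := hasSum_jterm hr hr0 one_ne_zero N
    have hm : HasSum (fun n : ℤ => ((n - 1 : ℤ) : ℂ) * jterm r 1 N (n - 1)) D :=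
      hasSum_shift_sub (f := fun n : ℤ => (n : ℂ) * jterm r 1 N n) ih
    have hp : HasSum (fun n : ℤ => ((n + 1 : ℤ) : ℂ) * jterm r 1 N (n + 1)) D :=
      hasSum_shift_add (f := fun n : ℤ => (n : ℂ) * jterm r 1 N n) ih
    have hm0 : HasSum (fun n : ℤ => jterm r 1 N (n - 1)) (F r 1 N) :=
      hasSum_shift_sub h0
    have hp0 : HasSum (fun n : ℤ => jterm r 1 N (n + 1)) (F r 1 N) :=
      hasSum_shift_add h0
    refine hasSum_of_eq (((ih.mul_left (1 + (r ^ 2) ^ (2 * N + 1))).sub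
      ((hm.add hm0).mul_left ((r ^ 2) ^ N))).sub
      ((hp.sub hp0).mul_left ((r ^ 2) ^ (N + 1)))) (fun n => ?_) ?_
    · rw [jterm_succ hr hr0 one_ne_zero]
      push_cast
      ring
    · ring
  induction N with
  | zero =>
    have h0 : HasSum (fun n : ℤ => (n : ℂ) * jterm r 1 0 n) 0 := by
      convert hasSum_zero (α := ℂ) (β := ℤ) using 1
      funext n
      rw [jterm_zero]
      split_ifs with h <;> simp [h]
    convert key 0 0 h0 using 1
    simp [F]
  | succ N ih =>
    convert key (N + 1) _ ih using 1
    have : F r 1 (N + 1) = 0 := by simp [F, Finset.prod_range_succ']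
    rw [this, Finset.prod_range_succ, Finset.prod_range_succ]
    ring

/-- Absolute convergence of all theta series in use, by comparison with Mathlib's bound for the
terms of the two-variable Jacobi theta function. -/
lemma summable_theta (k : ℕ) {r y : ℂ} (hr : ‖r‖ < 1) (hr0 : r ≠ 0) (hy : y ≠ 0) :
    Summable fun n : ℤ => (n : ℂ) ^ k * r ^ (n ^ 2 - n) * y ^ n := by
  have hρ : 0 < ‖r‖ := norm_pos_iff.mpr hr0
  have hυ : 0 < ‖y‖ := norm_pos_iff.mpr hy
  have hl : Real.log ‖r‖ < 0 := Real.log_neg hρ hr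
  -- `S` and `T = -log ‖r‖ / π` are chosen so that `exp (-π (T n² - 2 S |n|))` dominates
  -- `‖r‖ ^ (n² - n) * ‖y‖ ^ n`.
  set S : ℝ := (|Real.log ‖y‖| - Real.log ‖r‖) / (2 * Real.pi) with hS
  have hT : 0 < -Real.log ‖r‖ / Real.pi := div_pos (by linarith) Real.pi_pos
  refine (summable_pow_mul_jacobiTheta₂_term_bound S hT k).of_norm_bounded fun n => ?_
  have hz {a : ℝ} (ha : 0 < a) (m : ℤ) : a ^ m = Real.exp (Real.log a * m) := by
    rw [← Real.rpow_intCast, Real.rpow_def_of_pos ha]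
  rw [mul_assoc, norm_mul, norm_pow, norm_mul, norm_zpow, norm_zpow, Complex.norm_intCast,
    hz hρ, hz hυ, ← Real.exp_add]
  push_cast
  gcongr
  rw [show -Real.pi * (-Real.log ‖r‖ / Real.pi * (n : ℝ) ^ 2 - 2 * S * |(n : ℝ)|) =
    Real.log ‖r‖ * (n : ℝ) ^ 2 + (|Real.log ‖y‖| - Real.log ‖r‖) * |(n : ℝ)| by
      rw [hS]; field_simp; ring]
  have a1 : (n : ℝ) * Real.log ‖y‖ ≤ |(n : ℝ)| * |Real.log ‖y‖| := by
    rw [← abs_mul]; exact le_abs_self _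
  nlinarith [neg_abs_le (n : ℝ), le_abs_self (n : ℝ)]

/-! ### The Jacobi triple product and Jacobi's cube -/

/-- Euler's product `∏_{n ≥ 1} (1 - Qⁿ)`. -/
noncomputable def E (Q : ℂ) : ℂ := ∏' n : ℕ, (1 - Q ^ (n + 1))

lemma E_ne_zero {Q : ℂ} (hQ : ‖Q‖ < 1) : E Q ≠ 0 := by
  have h : Summable fun n : ℕ => ‖-Q ^ (n + 1)‖ := by
    simpa using (summable_nat_add_iff 1).mpr (summable_geometric_of_lt_one (norm_nonneg _) hQ)
  have := tprod_one_add_ne_zero_of_summable (f := fun n : ℕ => -Q ^ (n + 1))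
    (fun i => by simpa [← sub_eq_add_neg] using one_sub_pow_ne_zero hQ i) h
  simpa [E, ← sub_eq_add_neg] using this

lemma tendsto_E {Q : ℂ} (hQ : ‖Q‖ < 1) :
    Tendsto (fun N => ∏ i ∈ Finset.range N, (1 - Q ^ (i + 1))) atTop (𝓝 (E Q)) :=
  (ModularForm.multipliable_one_sub_pow hQ).tendsto_prod_tprod_nat

lemma tendsto_invP {Q : ℂ} (hQ : ‖Q‖ < 1) : Tendsto (invP Q) atTop (𝓝 (E Q)⁻¹) := by
  have h := ((tendsto_E hQ).inv₀ (E_ne_zero hQ)).comp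
    (tendsto_atTop_atTop.mpr fun b => ⟨(b : ℤ), fun a ha => by omega⟩ :
      Tendsto Int.toNat atTop atTop)
  refine h.congr' ?_
  filter_upwards [eventually_ge_atTop 0] with k hk
  simp [invP, hk]

lemma exists_invP_bound {Q : ℂ} (hQ : ‖Q‖ < 1) : ∃ C, 0 ≤ C ∧ ∀ k, ‖invP Q k‖ ≤ C := by
  obtain ⟨C, hC⟩ := (Metric.isBounded_range_of_tendsto _
    ((tendsto_E hQ).inv₀ (E_ne_zero hQ))).exists_norm_le
  have h0 : 0 ≤ C := (norm_nonneg _).trans (hC _ ⟨0, rfl⟩)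
  refine ⟨C, h0, fun k => ?_⟩
  unfold invP
  split_ifs
  · exact hC _ ⟨k.toNat, rfl⟩
  · simpa using h0

/-- Tannery's theorem for the finite triple product: as `N → ∞` the Gaussian binomial coefficient
tends to `1 / E (r²)`, boundedly in `n` and `N`. The weight `w` allows for both the triple product
(`w = 1`) and its first moment (`w n = n`). -/
lemma tendsto_tsum_jterm {r y : ℂ} (hr : ‖r‖ < 1) (w : ℤ → ℂ)
    (hw : Summable fun n : ℤ => w n * ((-1) ^ n * r ^ (n ^ 2 - n) * y ^ n)) :
    Tendsto (fun N => ∑' n, w n * jterm r y N n) atTop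
      (𝓝 ((E (r ^ 2))⁻¹ * ∑' n : ℤ, w n * ((-1) ^ n * r ^ (n ^ 2 - n) * y ^ n))) := by
  have hQ : ‖r ^ 2‖ < 1 := by rw [norm_pow]; exact pow_lt_one₀ (norm_nonneg _) hr (by norm_num)
  obtain ⟨C, hC0, hC⟩ := exists_invP_bound hQ
  obtain ⟨B, hB⟩ := (Metric.isBounded_range_of_tendsto _ (tendsto_E hQ)).exists_norm_le
  have hB0 : 0 ≤ B := (norm_nonneg _).trans (hB _ ⟨0, rfl⟩)
  rw [← tsum_mul_left]
  refine tendsto_tsum_of_dominated_convergence (hw.norm.mul_right (B * C * C)) (fun n => ?_)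
    (Eventually.of_forall fun N n => ?_)
  · have t1 : Tendsto (fun N : ℕ => ∏ i ∈ Finset.range (2 * N), (1 - (r ^ 2) ^ (i + 1))) atTop
        (𝓝 (E (r ^ 2))) :=
      (tendsto_E hQ).comp (tendsto_id.const_mul_atTop' (by norm_num))
    have t2 : Tendsto (fun N : ℕ => invP (r ^ 2) (N - n)) atTop (𝓝 (E (r ^ 2))⁻¹) :=
      (tendsto_invP hQ).comp (tendsto_atTop_add_const_right _ (-n) tendsto_natCast_atTop_atTop)
    have t3 : Tendsto (fun N : ℕ => invP (r ^ 2) (N + n)) atTop (𝓝 (E (r ^ 2))⁻¹) :=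
      (tendsto_invP hQ).comp (tendsto_atTop_add_const_right _ n tendsto_natCast_atTop_atTop)
    have := (((t1.mul t2).mul t3).const_mul ((-1) ^ n * r ^ (n ^ 2 - n) * y ^ n)).const_mul (w n)
    rw [mul_inv_cancel₀ (E_ne_zero hQ), one_mul] at this
    simp only [jterm]
    convert this using 2
    ring
  · rw [jterm, ← mul_assoc, norm_mul]
    gcongr
    rw [norm_mul, norm_mul]
    gcongr
    · exact hB _ ⟨2 * N, rfl⟩
    · exact hC _
    · exact hC _

lemma multipliable_one_sub_mul {Q : ℂ} (hQ : ‖Q‖ < 1) (c : ℂ) :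
    Multipliable fun i : ℕ => 1 - c * Q ^ i := by
  have h : Summable fun n : ℕ => ‖-(c * Q ^ n)‖ := by
    simpa using (summable_geometric_of_lt_one (norm_nonneg _) hQ).mul_left ‖c‖
  simpa [← sub_eq_add_neg] using multipliable_one_add_of_summable h

/-- **Jacobi triple product**. -/
lemma jacobi_triple {r y : ℂ} (hr : ‖r‖ < 1) (hr0 : r ≠ 0) (hy : y ≠ 0) :
    ∑' n : ℤ, (-1) ^ n * r ^ (n ^ 2 - n) * y ^ n =
      E (r ^ 2) * ((∏' i : ℕ, (1 - y * (r ^ 2) ^ i)) * ∏' i : ℕ, (1 - y⁻¹ * (r ^ 2) ^ (i + 1))) := by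
  have hQ : ‖r ^ 2‖ < 1 := by rw [norm_pow]; exact pow_lt_one₀ (norm_nonneg _) hr (by norm_num)
  have hs : Summable fun n : ℤ => (1 : ℂ) * ((-1) ^ n * r ^ (n ^ 2 - n) * y ^ n) := by
    convert summable_theta 0 hr hr0 (neg_ne_zero.mpr hy) using 2 with n
    rw [neg_eq_neg_one_mul y, mul_zpow]
    ring
  have h1 := tendsto_tsum_jterm hr (fun _ => 1) hs
  simp only [one_mul, (hasSum_jterm hr hr0 hy _).tsum_eq] at h1
  have m1 := multipliable_one_sub_mul hQ y
  have m2 : Multipliable fun i : ℕ => 1 - y⁻¹ * (r ^ 2) ^ (i + 1) := by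
    have h := multipliable_one_sub_mul hQ (y⁻¹ * r ^ 2)
    rwa [show (fun i : ℕ => 1 - y⁻¹ * r ^ 2 * (r ^ 2) ^ i) =
      fun i : ℕ => 1 - y⁻¹ * (r ^ 2) ^ (i + 1) from funext fun i => by ring] at h
  have h2 := (m1.mul m2).tendsto_prod_tprod_nat
  rw [m1.tprod_mul m2] at h2
  have := tendsto_nhds_unique h1 h2
  rw [← this, mul_inv_cancel_left₀ (E_ne_zero hQ)]

/-- Jacobi's formula for the cube of Euler's product, as a bilateral sum. -/
lemma jacobi_cube {r : ℂ} (hr : ‖r‖ < 1) (hr0 : r ≠ 0) :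
    ∑' n : ℤ, (n : ℂ) * ((-1) ^ n * r ^ (n ^ 2 - n)) = -E (r ^ 2) ^ 3 := by
  have hQ : ‖r ^ 2‖ < 1 := by rw [norm_pow]; exact pow_lt_one₀ (norm_nonneg _) hr (by norm_num)
  have hs : Summable fun n : ℤ => (n : ℂ) * ((-1) ^ n * r ^ (n ^ 2 - n) * 1 ^ n) := by
    convert summable_theta 1 hr hr0 (neg_ne_zero.mpr one_ne_zero) using 2 with n
    rw [one_zpow]
    ring
  have h1 := (tendsto_add_atTop_iff_nat 1).mpr (tendsto_tsum_jterm hr (fun n => (n : ℂ)) hs)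
  simp only [(hasSum_mul_jterm hr hr0 _).tsum_eq] at h1
  have h2 := (((tendsto_add_atTop_iff_nat 1).mpr (tendsto_E hQ)).mul (tendsto_E hQ)).neg
  have := tendsto_nhds_unique h1 h2
  simp only [one_zpow, mul_one] at this
  have h0 := E_ne_zero hQ
  rw [inv_mul_eq_iff_eq_mul₀ h0] at this
  rw [this]
  ring

/-! ### Product formulas for the theta series -/

lemma multipliable_one_add_mul {Q : ℂ} (hQ : ‖Q‖ < 1) (c : ℂ) :
    Multipliable fun i : ℕ => 1 + c * Q ^ i := by
  simpa using multipliable_one_sub_mul hQ (-c)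

/-- `∏ (1 - Qⁿ) · ∏ (1 + Qⁿ) = ∏ (1 - Q²ⁿ)`, both products over `n ≥ 1`. -/
lemma E_mul_tprod {Q : ℂ} (hQ : ‖Q‖ < 1) :
    E Q * ∏' i : ℕ, (1 + Q * Q ^ i) = E (Q ^ 2) := by
  unfold E
  rw [← (ModularForm.multipliable_one_sub_pow hQ).tprod_mul (multipliable_one_add_mul hQ Q)]
  exact tprod_congr fun i => by ring

/-- `∏ (1 + Qⁿ)` over odd `n`, as a quotient of Euler products. -/
lemma tprod_odd {Q : ℂ} (hQ : ‖Q‖ < 1) :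
    (∏' i : ℕ, (1 + Q * (Q ^ 2) ^ i)) * E Q * E (Q ^ 4) = E (Q ^ 2) ^ 2 := by
  have hQ2 : ‖Q ^ 2‖ < 1 := by rw [norm_pow]; exact pow_lt_one₀ (norm_nonneg _) hQ (by norm_num)
  have h1 := E_mul_tprod hQ
  have h2 := E_mul_tprod hQ2
  have m1 : Multipliable fun i : ℕ => 1 + Q * Q ^ (2 * i) := by
    have h := multipliable_one_add_mul hQ2 Q
    rwa [show (fun i : ℕ => 1 + Q * (Q ^ 2) ^ i) =
      fun i : ℕ => 1 + Q * Q ^ (2 * i) from funext fun i => by ring] at h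
  have m2 : Multipliable fun i : ℕ => 1 + Q * Q ^ (2 * i + 1) := by
    have h := multipliable_one_add_mul hQ2 (Q ^ 2)
    rwa [show (fun i : ℕ => 1 + Q ^ 2 * (Q ^ 2) ^ i) =
      fun i : ℕ => 1 + Q * Q ^ (2 * i + 1) from funext fun i => by ring] at h
  have h3 := tprod_even_mul_odd (f := fun i : ℕ => 1 + Q * Q ^ i) m1 m2
  have e1 : ∏' i : ℕ, (1 + Q * (Q ^ 2) ^ i) = ∏' i : ℕ, (1 + Q * Q ^ (2 * i)) :=
    tprod_congr fun i => by ring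
  have e2 : ∏' i : ℕ, (1 + Q ^ 2 * (Q ^ 2) ^ i) = ∏' i : ℕ, (1 + Q * Q ^ (2 * i + 1)) :=
    tprod_congr fun i => by ring
  rw [show (Q ^ 2) ^ 2 = Q ^ 4 by ring, e2] at h2
  rw [← h3] at h1
  rw [e1, sq, ← h2]
  nth_rewrite 2 [← h1]
  ring

/-- The theta function `∑ q^(n²) = E(q²)⁵ / (E(q)² E(q⁴)²)`: the triple product at `y = -q`. -/
lemma theta_a {q : ℂ} (hq : ‖q‖ < 1) (hq0 : q ≠ 0) :
    (∑' n : ℤ, q ^ (n ^ 2)) * (E q ^ 2 * E (q ^ 4) ^ 2) = E (q ^ 2) ^ 5 := by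
  have h := jacobi_triple hq hq0 (neg_ne_zero.mpr hq0)
  have e : ∑' n : ℤ, (-1) ^ n * q ^ (n ^ 2 - n) * (-q) ^ n = ∑' n : ℤ, q ^ (n ^ 2) := by
    refine tsum_congr fun n => ?_
    rw [mul_right_comm, ← mul_zpow, neg_one_mul, neg_neg, ← zpow_add₀ hq0]
    congr 1
    ring
  have e1 : ∏' i : ℕ, (1 - -q * (q ^ 2) ^ i) = ∏' i : ℕ, (1 + q * (q ^ 2) ^ i) :=
    tprod_congr fun i => by ring
  have e2 : ∏' i : ℕ, (1 - (-q)⁻¹ * (q ^ 2) ^ (i + 1)) = ∏' i : ℕ, (1 + q * (q ^ 2) ^ i) :=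
    tprod_congr fun i => by field_simp; ring
  have h3 := tprod_odd hq
  rw [e, e1, e2] at h
  rw [h]
  linear_combination (E (q ^ 2) * ((∏' i : ℕ, (1 + q * (q ^ 2) ^ i)) * E q * E (q ^ 4) +
    E (q ^ 2) ^ 2)) * h3

/-- The theta function `∑ r^(n² - n) = 2 E(r⁴)² / E(r²)`: the triple product at `y = -1`. -/
lemma theta_c {r : ℂ} (hr : ‖r‖ < 1) (hr0 : r ≠ 0) :
    (∑' n : ℤ, r ^ (n ^ 2 - n)) * E (r ^ 2) = 2 * E (r ^ 4) ^ 2 := by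
  have hQ : ‖r ^ 2‖ < 1 := by rw [norm_pow]; exact pow_lt_one₀ (norm_nonneg _) hr (by norm_num)
  have h := jacobi_triple hr hr0 (neg_ne_zero.mpr one_ne_zero)
  have e : ∑' n : ℤ, (-1) ^ n * r ^ (n ^ 2 - n) * (-1) ^ n = ∑' n : ℤ, r ^ (n ^ 2 - n) := by
    refine tsum_congr fun n => ?_
    rw [mul_right_comm, ← mul_zpow]
    simp
  have m := multipliable_one_add_mul hQ (r ^ 2)
  have e1 : ∏' i : ℕ, (1 - -1 * (r ^ 2) ^ i) = 2 * ∏' i : ℕ, (1 + r ^ 2 * (r ^ 2) ^ i) := by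
    rw [tprod_eq_zero_mul']
    · congr 1
      · norm_num
      · exact tprod_congr fun i => by ring
    · rwa [show (fun i : ℕ => 1 + r ^ 2 * (r ^ 2) ^ i) =
        fun i : ℕ => 1 - -1 * (r ^ 2) ^ (i + 1) from funext fun i => by ring] at m
  have e2 : ∏' i : ℕ, (1 - (-1 : ℂ)⁻¹ * (r ^ 2) ^ (i + 1)) = ∏' i : ℕ, (1 + r ^ 2 * (r ^ 2) ^ i) :=
    tprod_congr fun i => by rw [inv_neg, inv_one]; ring
  have h3 := E_mul_tprod hQ
  rw [show (r ^ 2) ^ 2 = r ^ 4 by ring] at h3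
  rw [e, e1, e2] at h
  rw [h, ← h3]
  ring

/-- Jacobi's cube in antisymmetric form. The `n ↔ 1 - n` symmetric part `∑ (-1)ⁿ q^(n² - n)`
vanishes, being the triple product at `y = 1`. -/
lemma theta_j {q : ℂ} (hq : ‖q‖ < 1) (hq0 : q ≠ 0) :
    ∑' n : ℤ, (2 * (n : ℂ) - 1) * ((-1) ^ n * q ^ (n ^ 2 - n)) = -2 * E (q ^ 2) ^ 3 := by
  have s1 : Summable fun n : ℤ => (n : ℂ) * ((-1) ^ n * q ^ (n ^ 2 - n)) := by
    convert summable_theta 1 hq hq0 (neg_ne_zero.mpr one_ne_zero) using 2 with n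
    ring
  have s0 : Summable fun n : ℤ => (-1 : ℂ) ^ n * q ^ (n ^ 2 - n) := by
    convert summable_theta 0 hq hq0 (neg_ne_zero.mpr one_ne_zero) using 2 with n
    ring
  have h0 := jacobi_triple hq hq0 one_ne_zero
  have z : ∏' i : ℕ, (1 - (1 : ℂ) * (q ^ 2) ^ i) = 0 :=
    tprod_of_exists_eq_zero ⟨0, by simp⟩
  rw [z, zero_mul, mul_zero] at h0
  simp only [one_zpow, mul_one] at h0
  have := ((s1.hasSum.mul_left 2).sub s0.hasSum).tsum_eq
  rw [jacobi_cube hq hq0, h0] at this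
  rw [show -2 * E (q ^ 2) ^ 3 = 2 * -E (q ^ 2) ^ 3 - 0 by ring, ← this]
  exact tsum_congr fun n => by ring

/-! ### Rotating the lattice: quadratic relations between theta series -/

/-- Splitting a sum over pairs `(m, n) ∈ ℤ²` by the parity of `m + n`. -/
lemma tsum_parity {f : ℤ × ℤ → ℂ} (hf : Summable f) :
    ∑' p, f p = ∑' p : ℤ × ℤ, f (p.1 + p.2, p.1 - p.2) +
      ∑' p : ℤ × ℤ, f (p.1 + p.2 - 1, p.1 - p.2) := by
  let g : (ℤ × ℤ) ⊕ (ℤ × ℤ) → ℤ × ℤ :=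
    Sum.elim (fun p => (p.1 + p.2, p.1 - p.2)) (fun p => (p.1 + p.2 - 1, p.1 - p.2))
  have hg : Function.Bijective g := by
    constructor
    · rintro (⟨a, b⟩ | ⟨a, b⟩) (⟨c, d⟩ | ⟨c, d⟩) h <;>
        simp only [g, Sum.elim_inl, Sum.elim_inr, Prod.mk.injEq] at h <;>
        simp only [Sum.inl.injEq, Sum.inr.injEq, Prod.mk.injEq, reduceCtorEq] <;> omega
    · rintro ⟨m, n⟩
      rcases Int.even_or_odd (m + n) with ⟨k, hk⟩ | ⟨k, hk⟩
      · exact ⟨Sum.inl (k, k - n), by simp only [g, Sum.elim_inl, Prod.mk.injEq]; omega⟩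
      · exact ⟨Sum.inr (k + 1, k + 1 - n), by simp only [g, Sum.elim_inr, Prod.mk.injEq]; omega⟩
  have hs : Summable (f ∘ g) := (Equiv.ofBijective g hg).summable_iff.mpr hf
  rw [← (Equiv.ofBijective g hg).tsum_eq f]
  exact Summable.tsum_sum (f := f ∘ g) (hs.comp_injective Sum.inl_injective)
    (hs.comp_injective Sum.inr_injective)

lemma hasSum_prod_mul {f g : ℤ → ℂ} (hf : Summable f) (hg : Summable g) :
    HasSum (fun p : ℤ × ℤ => f p.1 * g p.2) ((∑' n, f n) * ∑' n, g n) := by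
  rw [tsum_mul_tsum_of_summable_norm hf.norm hg.norm]
  exact (summable_mul_of_summable_norm hf.norm hg.norm).hasSum

lemma summable_of_eq {ι : Type*} {f g : ι → ℂ} (h : Summable f) (hf : ∀ n, g n = f n) :
    Summable g := by
  rwa [show g = f from funext hf]

lemma summable_a {p : ℂ} (hp : ‖p‖ < 1) (hp0 : p ≠ 0) (k : ℕ) :
    Summable fun n : ℤ => (n : ℂ) ^ k * p ^ (2 * n ^ 2) := by
  have h2 : ‖p ^ 2‖ < 1 := by rw [norm_pow]; exact pow_lt_one₀ (norm_nonneg _) hp (by norm_num)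
  refine summable_of_eq (summable_theta k h2 (pow_ne_zero 2 hp0) (pow_ne_zero 2 hp0)) fun n => ?_
  rw [mul_assoc, ← zpow_natCast p, ← zpow_mul, ← zpow_mul, ← zpow_add₀ hp0]
  congr 2
  push_cast
  ring

lemma summable_b {p : ℂ} (hp : ‖p‖ < 1) (hp0 : p ≠ 0) (k : ℕ) :
    Summable fun n : ℤ => (n : ℂ) ^ k * p ^ (4 * n ^ 2) := by
  have h2 : ‖p ^ 4‖ < 1 := by rw [norm_pow]; exact pow_lt_one₀ (norm_nonneg _) hp (by norm_num)
  refine summable_of_eq (summable_theta k h2 (pow_ne_zero 4 hp0) (pow_ne_zero 4 hp0)) fun n => ?_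
  rw [mul_assoc, ← zpow_natCast p, ← zpow_mul, ← zpow_mul, ← zpow_add₀ hp0]
  congr 2
  push_cast
  ring

lemma c_term {p : ℂ} (hp0 : p ≠ 0) (n : ℤ) :
    p ^ ((2 * n - 1) ^ 2) = p * (p ^ 4) ^ (n ^ 2 - n) := by
  rw [← zpow_natCast, ← zpow_mul, ← zpow_one_add₀ hp0]
  congr 1
  push_cast
  ring

lemma summable_c0 {p : ℂ} (hp : ‖p‖ < 1) (hp0 : p ≠ 0) :
    Summable fun n : ℤ => p ^ ((2 * n - 1) ^ 2) := by
  have h2 : ‖p ^ 4‖ < 1 := by rw [norm_pow]; exact pow_lt_one₀ (norm_nonneg _) hp (by norm_num)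
  refine summable_of_eq ((summable_theta 0 h2 (pow_ne_zero 4 hp0) one_ne_zero).mul_left p)
    fun n => ?_
  rw [c_term hp0, one_zpow]
  ring

lemma summable_c2 {p : ℂ} (hp : ‖p‖ < 1) (hp0 : p ≠ 0) :
    Summable fun n : ℤ => (2 * (n : ℂ) - 1) ^ 2 * p ^ ((2 * n - 1) ^ 2) := by
  have h2 : ‖p ^ 4‖ < 1 := by rw [norm_pow]; exact pow_lt_one₀ (norm_nonneg _) hp (by norm_num)
  have h := fun k => summable_theta k h2 (pow_ne_zero 4 hp0) one_ne_zero
  refine summable_of_eq (((((h 2).mul_left 4).sub ((h 1).mul_left 4)).add (h 0)).mul_left p)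
    fun n => ?_
  rw [c_term hp0, one_zpow]
  ring

lemma summable_j {p : ℂ} (hp : ‖p‖ < 1) (hp0 : p ≠ 0) :
    Summable fun n : ℤ => (2 * (n : ℂ) - 1) * ((-1) ^ n * (p ^ 2) ^ (n ^ 2 - n)) := by
  have h2 : ‖p ^ 2‖ < 1 := by rw [norm_pow]; exact pow_lt_one₀ (norm_nonneg _) hp (by norm_num)
  have h := fun k => summable_theta k h2 (pow_ne_zero 2 hp0) (neg_ne_zero.mpr one_ne_zero)
  refine summable_of_eq (((h 1).mul_left 2).sub (h 0)) fun n => ?_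
  ring

/-- `a² = b² + c²`. Apply `tsum_parity` to `a² = ∑ p^(2(m² + n²))` and use
`2 (m² + n²) = (m + n)² + (m - n)²`. -/
lemma theta_sq {p : ℂ} (hp : ‖p‖ < 1) (hp0 : p ≠ 0) :
    (∑' n : ℤ, p ^ (2 * n ^ 2)) ^ 2 =
    (∑' n : ℤ, p ^ (4 * n ^ 2)) ^ 2 + (∑' n : ℤ, p ^ ((2 * n - 1) ^ 2)) ^ 2 := by
  have ha : Summable fun n : ℤ => p ^ (2 * n ^ 2) := by simpa using summable_a hp hp0 0
  have hb : Summable fun n : ℤ => p ^ (4 * n ^ 2) := by simpa using summable_b hp hp0 0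
  have hc := summable_c0 hp hp0
  have A := hasSum_prod_mul ha ha
  rw [sq, sq, sq, ← A.tsum_eq, ← (hasSum_prod_mul hb hb).tsum_eq, ← (hasSum_prod_mul hc hc).tsum_eq,
    tsum_parity A.summable]
  congr 1 <;> refine tsum_congr fun x => ?_ <;>
    · simp only [← zpow_add₀ hp0]
      congr 1
      ring

/-- `2 a a₂ = 4 b b₂ + c c₂`, the image of `theta_sq` under `p d/dp`, divided by `2`. It is obtained
by the same rotation of the lattice, with no appeal to termwise differentiation. -/
lemma theta_deriv {p : ℂ} (hp : ‖p‖ < 1) (hp0 : p ≠ 0) :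
    2 * ((∑' n : ℤ, p ^ (2 * n ^ 2)) * ∑' n : ℤ, (n : ℂ) ^ 2 * p ^ (2 * n ^ 2)) =
    4 * ((∑' n : ℤ, p ^ (4 * n ^ 2)) * ∑' n : ℤ, (n : ℂ) ^ 2 * p ^ (4 * n ^ 2)) +
    (∑' n : ℤ, p ^ ((2 * n - 1) ^ 2)) * ∑' n : ℤ, (2 * (n : ℂ) - 1) ^ 2 * p ^ ((2 * n - 1) ^ 2) := by
  have ha : Summable fun n : ℤ => p ^ (2 * n ^ 2) := by simpa using summable_a hp hp0 0
  have hb : Summable fun n : ℤ => p ^ (4 * n ^ 2) := by simpa using summable_b hp hp0 0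
  have hc := summable_c0 hp hp0
  have ha2 := summable_a hp hp0 2
  have hb2 := summable_b hp hp0 2
  have hc2 := summable_c2 hp hp0
  have A := (hasSum_prod_mul ha ha2).add (hasSum_prod_mul ha2 ha)
  have B := (hasSum_prod_mul hb hb2).add (hasSum_prod_mul hb2 hb)
  have C := (hasSum_prod_mul hc hc2).add (hasSum_prod_mul hc2 hc)
  have e := tsum_parity A.summable
  rw [A.tsum_eq] at e
  have e1 := (B.mul_left 2).tsum_eq
  have e2 := (C.mul_left (1 / 2)).tsum_eq
  have f1 : ∑' x : ℤ × ℤ, (p ^ (2 * (x.1 + x.2) ^ 2) *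
        (((x.1 - x.2 : ℤ) : ℂ) ^ 2 * p ^ (2 * (x.1 - x.2) ^ 2)) +
      ((x.1 + x.2 : ℤ) : ℂ) ^ 2 * p ^ (2 * (x.1 + x.2) ^ 2) * p ^ (2 * (x.1 - x.2) ^ 2)) =
      ∑' x : ℤ × ℤ, 2 * (p ^ (4 * x.1 ^ 2) * ((x.2 : ℂ) ^ 2 * p ^ (4 * x.2 ^ 2)) +
        (x.1 : ℂ) ^ 2 * p ^ (4 * x.1 ^ 2) * p ^ (4 * x.2 ^ 2)) := by
    refine tsum_congr fun x => ?_
    have : p ^ (2 * (x.1 + x.2) ^ 2) * p ^ (2 * (x.1 - x.2) ^ 2) =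
        p ^ (4 * x.1 ^ 2) * p ^ (4 * x.2 ^ 2) := by
      simp only [← zpow_add₀ hp0]
      congr 1
      ring
    push_cast
    linear_combination (((x.1 : ℂ) - x.2) ^ 2 + ((x.1 : ℂ) + x.2) ^ 2) * this
  have f2 : ∑' x : ℤ × ℤ, (p ^ (2 * (x.1 + x.2 - 1) ^ 2) *
        (((x.1 - x.2 : ℤ) : ℂ) ^ 2 * p ^ (2 * (x.1 - x.2) ^ 2)) +
      ((x.1 + x.2 - 1 : ℤ) : ℂ) ^ 2 * p ^ (2 * (x.1 + x.2 - 1) ^ 2) * p ^ (2 * (x.1 - x.2) ^ 2)) =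
      ∑' x : ℤ × ℤ, 1 / 2 * (p ^ ((2 * x.1 - 1) ^ 2) *
          ((2 * (x.2 : ℂ) - 1) ^ 2 * p ^ ((2 * x.2 - 1) ^ 2)) +
        (2 * (x.1 : ℂ) - 1) ^ 2 * p ^ ((2 * x.1 - 1) ^ 2) * p ^ ((2 * x.2 - 1) ^ 2)) := by
    refine tsum_congr fun x => ?_
    have : p ^ (2 * (x.1 + x.2 - 1) ^ 2) * p ^ (2 * (x.1 - x.2) ^ 2) =
        p ^ ((2 * x.1 - 1) ^ 2) * p ^ ((2 * x.2 - 1) ^ 2) := by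
      simp only [← zpow_add₀ hp0]
      congr 1
      ring
    push_cast
    linear_combination (((x.1 : ℂ) - x.2) ^ 2 + ((x.1 : ℂ) + x.2 - 1) ^ 2) * this
  rw [f1, f2, e1, e2] at e
  linear_combination e

/-- `p J² = 2 c₂ b - 8 c b₂`, where `J = ∑ (2n - 1) (-1)ⁿ q^(n² - n)`. Write `s = m + n - 1` and
`d = m - n`. In `p J²` the term with indices `(m, n)` is
`(-1)^(m + n) (s² - d²) p^(s² + d²)`. Exactly one of `s`, `d` is odd; exchanging them shows that the
two parity classes contribute equally, and each gives `∑ (u² - v²) p^(u² + v²)` over odd `u` and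
even `v`. -/
lemma theta_wronskian {p : ℂ} (hp : ‖p‖ < 1) (hp0 : p ≠ 0) :
    p * (∑' n : ℤ, (2 * (n : ℂ) - 1) * ((-1) ^ n * (p ^ 2) ^ (n ^ 2 - n))) ^ 2 =
    2 * ((∑' n : ℤ, (2 * (n : ℂ) - 1) ^ 2 * p ^ ((2 * n - 1) ^ 2)) * ∑' n : ℤ, p ^ (4 * n ^ 2)) -
    8 * ((∑' n : ℤ, p ^ ((2 * n - 1) ^ 2)) * ∑' n : ℤ, (n : ℂ) ^ 2 * p ^ (4 * n ^ 2)) := by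
  have hb : Summable fun n : ℤ => p ^ (4 * n ^ 2) := by simpa using summable_b hp hp0 0
  have hc := summable_c0 hp hp0
  have hj := summable_j hp hp0
  have hb2 := summable_b hp hp0 2
  have hc2 := summable_c2 hp hp0
  have A := (hasSum_prod_mul hj hj).mul_left p
  have B := (hasSum_prod_mul hc2 hb).sub ((hasSum_prod_mul hc hb2).mul_left 4)
  have e := tsum_parity A.summable
  rw [A.tsum_eq] at e
  have key (m n s d : ℤ) (h : 2 * (m ^ 2 - m) + 2 * (n ^ 2 - n) + 1 = s ^ 2 + d ^ 2) :
      p * ((p ^ 2) ^ (m ^ 2 - m) * (p ^ 2) ^ (n ^ 2 - n)) = p ^ s ^ 2 * p ^ d ^ 2 := by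
    rw [← zpow_natCast, ← zpow_mul, ← zpow_mul, ← zpow_add₀ hp0, ← zpow_add₀ hp0,
      ← zpow_one_add₀ hp0, ← h]
    congr 1
    push_cast
    ring
  have key' (m n k : ℤ) (h : m + n = 2 * k) : (-1 : ℂ) ^ m * (-1) ^ n = 1 := by
    rw [← zpow_add₀ (by norm_num), h, zpow_mul]; simp
  have key'' (m n k : ℤ) (h : m + n = 2 * k - 1) : (-1 : ℂ) ^ m * (-1) ^ n = -1 := by
    rw [← zpow_add₀ (by norm_num), h, zpow_sub₀ (by norm_num), zpow_mul]; norm_num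
  have f1 : ∑' x : ℤ × ℤ, p * ((2 * ((x.1 + x.2 : ℤ) : ℂ) - 1) *
        ((-1) ^ (x.1 + x.2) * (p ^ 2) ^ ((x.1 + x.2) ^ 2 - (x.1 + x.2))) *
      ((2 * ((x.1 - x.2 : ℤ) : ℂ) - 1) *
        ((-1) ^ (x.1 - x.2) * (p ^ 2) ^ ((x.1 - x.2) ^ 2 - (x.1 - x.2))))) =
      ∑' x : ℤ × ℤ, ((2 * (x.1 : ℂ) - 1) ^ 2 * p ^ ((2 * x.1 - 1) ^ 2) * p ^ (4 * x.2 ^ 2) -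
        4 * (p ^ ((2 * x.1 - 1) ^ 2) * ((x.2 : ℂ) ^ 2 * p ^ (4 * x.2 ^ 2)))) := by
    refine tsum_congr fun x => ?_
    have h1 := key (x.1 + x.2) (x.1 - x.2) (2 * x.1 - 1) (2 * x.2) (by ring)
    have h2 := key' (x.1 + x.2) (x.1 - x.2) x.1 (by ring)
    rw [show (2 * x.2) ^ 2 = 4 * x.2 ^ 2 by ring] at h1
    push_cast
    generalize (-1 : ℂ) ^ (x.1 + x.2) = u at *
    generalize (-1 : ℂ) ^ (x.1 - x.2) = v at *
    generalize (p ^ 2) ^ ((x.1 + x.2) ^ 2 - (x.1 + x.2)) = U at *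
    generalize (p ^ 2) ^ ((x.1 - x.2) ^ 2 - (x.1 - x.2)) = V at *
    linear_combination ((2 * (x.1 : ℂ) - 1) ^ 2 - 4 * (x.2 : ℂ) ^ 2) * (p * U * V) * h2 +
      ((2 * (x.1 : ℂ) - 1) ^ 2 - 4 * (x.2 : ℂ) ^ 2) * h1
  have f2 : ∑' x : ℤ × ℤ, p * ((2 * ((x.1 + x.2 - 1 : ℤ) : ℂ) - 1) *
        ((-1) ^ (x.1 + x.2 - 1) * (p ^ 2) ^ ((x.1 + x.2 - 1) ^ 2 - (x.1 + x.2 - 1))) *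
      ((2 * ((x.1 - x.2 : ℤ) : ℂ) - 1) *
        ((-1) ^ (x.1 - x.2) * (p ^ 2) ^ ((x.1 - x.2) ^ 2 - (x.1 - x.2))))) =
      ∑' x : ℤ × ℤ, ((2 * (x.1 : ℂ) - 1) ^ 2 * p ^ ((2 * x.1 - 1) ^ 2) * p ^ (4 * x.2 ^ 2) -
        4 * (p ^ ((2 * x.1 - 1) ^ 2) * ((x.2 : ℂ) ^ 2 * p ^ (4 * x.2 ^ 2)))) := by
    -- Here the odd one is `d`, so the roles of `s` and `d` are exchanged.
    refine Eq.trans ?_ (((Equiv.prodComm ℤ ℤ).trans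
      ((Equiv.refl ℤ).prodCongr (Equiv.subRight (1 : ℤ)))).tsum_eq _)
    refine tsum_congr fun x => ?_
    have h1 := key (x.1 + x.2 - 1) (x.1 - x.2) (2 * x.2 - 1) (2 * (x.1 - 1)) (by ring)
    have h2 := key'' (x.1 + x.2 - 1) (x.1 - x.2) x.1 (by ring)
    rw [show (2 * (x.1 - 1)) ^ 2 = 4 * (x.1 - 1) ^ 2 by ring] at h1
    simp only [Equiv.trans_apply, Equiv.prodComm_apply, Equiv.prodCongr_apply, Prod.map,
      Prod.fst_swap, Prod.snd_swap, Equiv.refl_apply, Equiv.subRight_apply]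
    push_cast
    generalize (-1 : ℂ) ^ (x.1 + x.2 - 1) = u at *
    generalize (-1 : ℂ) ^ (x.1 - x.2) = v at *
    generalize (p ^ 2) ^ ((x.1 + x.2 - 1) ^ 2 - (x.1 + x.2 - 1)) = U at *
    generalize (p ^ 2) ^ ((x.1 - x.2) ^ 2 - (x.1 - x.2)) = V at *
    linear_combination (-(2 * (x.2 : ℂ) - 1) ^ 2 + 4 * ((x.1 : ℂ) - 1) ^ 2) * (p * U * V) * h2 +
      ((2 * (x.2 : ℂ) - 1) ^ 2 - 4 * ((x.1 : ℂ) - 1) ^ 2) * h1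
  rw [f1, f2, B.tsum_eq] at e
  linear_combination e

/-! ### The double series and the eta product -/

/-- The double series converges and equals `(a₂ b - 2 a b₂) / 2`. -/
lemma hasSum_harmonic {p : ℂ} (hp : ‖p‖ < 1) (hp0 : p ≠ 0) :
    HasSum (fun x : ℤ × ℤ => (((x.1 : ℂ) ^ 2 - 2 * (x.2 : ℂ) ^ 2) / 2) *
        (p ^ 2) ^ (x.1 ^ 2 + 2 * x.2 ^ 2))
      (((∑' n : ℤ, (n : ℂ) ^ 2 * p ^ (2 * n ^ 2)) * (∑' n : ℤ, p ^ (4 * n ^ 2)) -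
        2 * ((∑' n : ℤ, p ^ (2 * n ^ 2)) * ∑' n : ℤ, (n : ℂ) ^ 2 * p ^ (4 * n ^ 2))) / 2) := by
  have ha : Summable fun n : ℤ => p ^ (2 * n ^ 2) := by simpa using summable_a hp hp0 0
  have hb : Summable fun n : ℤ => p ^ (4 * n ^ 2) := by simpa using summable_b hp hp0 0
  have ha2 := summable_a hp hp0 2
  have hb2 := summable_b hp hp0 2
  refine hasSum_of_eq (((hasSum_prod_mul ha2 hb).sub
    ((hasSum_prod_mul ha hb2).mul_left 2)).mul_right (1 / 2)) (fun x => ?_) (by ring)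
  have : (p ^ 2) ^ (x.1 ^ 2 + 2 * x.2 ^ 2) = p ^ (2 * x.1 ^ 2) * p ^ (4 * x.2 ^ 2) := by
    rw [← zpow_natCast, ← zpow_mul, ← zpow_add₀ hp0]
    congr 1
    push_cast
    ring
  rw [this]
  ring

/-- Multiplying `a₂ b - 2 a b₂` by `a` and eliminating `a²` and `a a₂` with `theta_sq` and
`theta_deriv` leaves `c (c₂ b - 4 c b₂) / 2`, which is `c p J² / 4` by `theta_wronskian`. The
product formulas for `a`, `c` and `J` then finish. -/
lemma harmonic_eq {p : ℂ} (hp : ‖p‖ < 1) (hp0 : p ≠ 0) :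
    ((∑' n : ℤ, (n : ℂ) ^ 2 * p ^ (2 * n ^ 2)) * (∑' n : ℤ, p ^ (4 * n ^ 2)) -
        2 * ((∑' n : ℤ, p ^ (2 * n ^ 2)) * ∑' n : ℤ, (n : ℂ) ^ 2 * p ^ (4 * n ^ 2))) / 2 =
      p ^ 2 * (E (p ^ 2) ^ 2 * E ((p ^ 2) ^ 2) * E ((p ^ 2) ^ 4) * E ((p ^ 2) ^ 8) ^ 2) := by
  have h2 : ‖p ^ 2‖ < 1 := by rw [norm_pow]; exact pow_lt_one₀ (norm_nonneg _) hp (by norm_num)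
  have h4 : ‖p ^ 4‖ < 1 := by rw [norm_pow]; exact pow_lt_one₀ (norm_nonneg _) hp (by norm_num)
  have h22 : ‖(p ^ 2) ^ 2‖ < 1 := by
    rw [norm_pow]; exact pow_lt_one₀ (norm_nonneg _) h2 (by norm_num)
  have h24 : ‖(p ^ 2) ^ 4‖ < 1 := by
    rw [norm_pow]; exact pow_lt_one₀ (norm_nonneg _) h2 (by norm_num)
  have A := theta_a h2 (pow_ne_zero 2 hp0)
  have C := theta_c h4 (pow_ne_zero 4 hp0)
  have J := theta_j h2 (pow_ne_zero 2 hp0)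
  have S := theta_sq hp hp0
  have D := theta_deriv hp hp0
  have W := theta_wronskian hp hp0
  have n1 := E_ne_zero h2
  have n2 := E_ne_zero h22
  have n4 := E_ne_zero h24
  have eA : ∑' n : ℤ, (p ^ 2) ^ (n ^ 2) = ∑' n : ℤ, p ^ (2 * n ^ 2) :=
    tsum_congr fun n => by rw [zpow_mul]; norm_cast
  have eC : ∑' n : ℤ, p ^ ((2 * n - 1) ^ 2) = p * ∑' n : ℤ, (p ^ 4) ^ (n ^ 2 - n) := by
    rw [← tsum_mul_left]
    exact tsum_congr fun n => c_term hp0 n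
  rw [J, eC] at W
  rw [eC] at S D
  rw [eA] at A
  rw [show (p ^ 4) ^ 2 = (p ^ 2) ^ 4 by ring, show (p ^ 4) ^ 4 = (p ^ 2) ^ 8 by ring] at C
  -- What remains is algebra in the theta series and Euler products. From here on `c` denotes
  -- `∑ p^(4(n² - n))`, so that the theta series `∑ p^((2n - 1)²)` is `p * c`.
  generalize E (p ^ 2) = E1 at *
  generalize E ((p ^ 2) ^ 2) = E2 at *
  generalize E ((p ^ 2) ^ 4) = E4 at *
  generalize E ((p ^ 2) ^ 8) = E8 at *
  generalize ∑' n : ℤ, p ^ (2 * n ^ 2) = a at *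
  generalize ∑' n : ℤ, (n : ℂ) ^ 2 * p ^ (2 * n ^ 2) = a2 at *
  generalize ∑' n : ℤ, p ^ (4 * n ^ 2) = b at *
  generalize ∑' n : ℤ, (n : ℂ) ^ 2 * p ^ (4 * n ^ 2) = b2 at *
  generalize ∑' n : ℤ, (p ^ 4) ^ (n ^ 2 - n) = c at *
  generalize ∑' n : ℤ, (2 * (n : ℂ) - 1) ^ 2 * p ^ ((2 * n - 1) ^ 2) = c2 at *
  have ha : a ≠ 0 := by
    rintro rfl
    rw [zero_mul] at A
    exact pow_ne_zero 5 n2 A.symm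
  have key : a * (a2 * b - 2 * (a * b2)) = p ^ 2 * c * E2 ^ 6 := by
    linear_combination (b / 2) * D - 2 * b2 * S - (p * c / 4) * W
  have hc : c = 2 * E8 ^ 2 / E4 := by rw [eq_div_iff n4, C]
  have hA : a = E2 ^ 5 / (E1 ^ 2 * E4 ^ 2) := by
    rw [eq_div_iff (mul_ne_zero (pow_ne_zero _ n1) (pow_ne_zero _ n4)), A]
  apply mul_left_cancel₀ ha
  rw [mul_div_assoc', key, hc, hA]
  field_simp

/-- `η(kτ)` in terms of the chosen 24th root `e^(2πiτ/24)` of `q`. -/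
lemma eta_eq (τ : ℂ) (k : ℕ) : dedekindEta (k * τ) =
    Complex.exp (2 * Real.pi * Complex.I * τ / 24) ^ k *
      E (Complex.exp (2 * Real.pi * Complex.I * τ) ^ k) := by
  rw [dedekindEta, E, ← Complex.exp_nat_mul, ← Complex.exp_nat_mul]
  rw [show 2 * (Real.pi : ℂ) * Complex.I * (k * τ) / 24 = k * (2 * Real.pi * Complex.I * τ / 24) by
    ring, show 2 * (Real.pi : ℂ) * Complex.I * (k * τ) = k * (2 * Real.pi * Complex.I * τ) by ring]

end EtaTheta

theorem eta_f_theta (τ : ℂ) (hτ : 0 < τ.im) :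
    Summable (fun p : ℤ × ℤ =>
      (((p.1 : ℂ) ^ 2 - 2 * (p.2 : ℂ) ^ 2) / 2) *
        Complex.exp (2 * (Real.pi : ℂ) * Complex.I * τ) ^ (p.1 ^ 2 + 2 * p.2 ^ 2)) ∧
    dedekindEta τ ^ 2 * dedekindEta (2 * τ) * dedekindEta (4 * τ) *
        dedekindEta (8 * τ) ^ 2 =
      ∑' p : ℤ × ℤ,
        (((p.1 : ℂ) ^ 2 - 2 * (p.2 : ℂ) ^ 2) / 2) *
          Complex.exp (2 * (Real.pi : ℂ) * Complex.I * τ) ^ (p.1 ^ 2 + 2 * p.2 ^ 2) := by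
  obtain ⟨p, hpdef⟩ : ∃ p, p = Complex.exp (Real.pi * Complex.I * τ) := ⟨_, rfl⟩
  have hp0 : p ≠ 0 := hpdef ▸ Complex.exp_ne_zero _
  have hp : ‖p‖ < 1 := by
    rw [hpdef, Complex.norm_exp, Real.exp_lt_one_iff]
    have : (Real.pi * Complex.I * τ).re = -(Real.pi * τ.im) := by simp
    rw [this]
    exact neg_lt_zero.mpr (mul_pos Real.pi_pos hτ)
  have hq : Complex.exp (2 * (Real.pi : ℂ) * Complex.I * τ) = p ^ 2 := by
    rw [hpdef, ← Complex.exp_nat_mul]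
    congr 1
    push_cast
    ring
  have h24 : Complex.exp (2 * (Real.pi : ℂ) * Complex.I * τ / 24) ^ 24 = p ^ 2 := by
    rw [← hq, ← Complex.exp_nat_mul]
    congr 1
    push_cast
    ring
  have e1 := EtaTheta.eta_eq τ 1
  have e2 := EtaTheta.eta_eq τ 2
  have e4 := EtaTheta.eta_eq τ 4
  have e8 := EtaTheta.eta_eq τ 8
  push_cast at e1 e2 e4 e8
  rw [one_mul, pow_one, pow_one] at e1
  have H := EtaTheta.hasSum_harmonic hp hp0
  rw [e1, e2, e4, e8, hq]
  refine ⟨H.summable, ?_⟩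
  -- The eta prefactors combine to `q`, as `2 + 2 + 4 + 8 * 2 = 24`.
  rw [H.tsum_eq, EtaTheta.harmonic_eq hp hp0, ← h24]
  ring
end

section
/- For every τ in the complex upper half-plane, with q = e^{2πiτ}, the identity η(2τ)³η(6τ)³ = Σ_{m,n∈ℤ} ((m² − 3n²)/2) · q^{m²+3n²} holds, where the double series converges absolutely. -/
/-! ### The `q`-binomial theorem and the finite Jacobi identity -/

/-- The finite product `(q; q)_n = ∏_{i=1}^{n} (1 - q^i)`. -/
noncomputable def qPoch (q : ℂ) (n : ℕ) : ℂ := ∏ i ∈ Finset.range n, (1 - q ^ (i + 1))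

/-- Gaussian binomial coefficient, defined by the `q`-Pascal recursion. -/
noncomputable def gaussChoose (q : ℂ) : ℕ → ℕ → ℂ
  | _, 0 => 1
  | 0, _ + 1 => 0
  | n + 1, k + 1 => gaussChoose q n k + q ^ (k + 1) * gaussChoose q n (k + 1)

lemma qPoch_succ (q : ℂ) (n : ℕ) : qPoch q (n + 1) = qPoch q n * (1 - q ^ (n + 1)) :=
  Finset.prod_range_succ _ _

lemma gaussChoose_zero_right (q : ℂ) (n : ℕ) : gaussChoose q n 0 = 1 := by
  cases n <;> rfl

lemma gaussChoose_eq_zero (q : ℂ) {n k : ℕ} (h : n < k) : gaussChoose q n k = 0 := by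
  induction n generalizing k with
  | zero =>
    obtain ⟨k, rfl⟩ := Nat.exists_eq_succ_of_ne_zero h.ne'
    rfl
  | succ n ih =>
    obtain ⟨k, rfl⟩ := Nat.exists_eq_succ_of_ne_zero (Nat.ne_zero_of_lt h)
    simp [gaussChoose, ih (show n < k by omega), ih (show n < k + 1 by omega)]

/-- The product formula for Gaussian binomial coefficients, cleared of denominators. -/
lemma gaussChoose_mul_qPoch (q : ℂ) (n k : ℕ) :
    gaussChoose q (n + k) k * (qPoch q n * qPoch q k) = qPoch q (n + k) := by
  induction k generalizing n with
  | zero => simp [gaussChoose_zero_right, qPoch]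
  | succ k ihk =>
    induction n with
    | zero =>
      have h := ihk 0
      have h0 := gaussChoose_eq_zero q (show k < k + 1 by omega)
      simp only [zero_add] at h ⊢
      rw [gaussChoose, h0, qPoch_succ]
      linear_combination (1 - q ^ (k + 1)) * h
    | succ n ihn =>
      have h := ihk (n + 1)
      rw [show n + 1 + k = n + (k + 1) by omega] at h
      rw [show n + 1 + (k + 1) = n + (k + 1) + 1 by omega, gaussChoose, qPoch_succ q (n + (k + 1))]
      rw [qPoch_succ q k, qPoch_succ q n] at *
      linear_combination (1 - q ^ (k + 1)) * h + q ^ (k + 1) * (1 - q ^ (n + 1)) * ihn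

/-- The `q`-binomial theorem. -/
lemma prod_one_add_mul_pow (q x : ℂ) (n : ℕ) :
    ∏ i ∈ Finset.range n, (1 + x * q ^ i) =
      ∑ k ∈ Finset.range (n + 1), q ^ (k.choose 2) * gaussChoose q n k * x ^ k := by
  induction n generalizing x with
  | zero => simp [gaussChoose]
  | succ n ih =>
    have e : ∏ i ∈ Finset.range n, (1 + x * q ^ (i + 1)) =
        ∏ i ∈ Finset.range n, (1 + x * q * q ^ i) :=
      Finset.prod_congr rfl fun i _ => by ring
    rw [Finset.prod_range_succ', e, ih (x * q)]
    have h0 : ∑ k ∈ Finset.range (n + 1), q ^ (k.choose 2) * gaussChoose q n k * (x * q) ^ k =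
        ∑ k ∈ Finset.range (n + 1), q ^ ((k + 1).choose 2) * (q ^ (k + 1) *
          gaussChoose q n (k + 1)) * x ^ (k + 1) + 1 := by
      have h1 := Finset.sum_range_succ'
        (fun k => q ^ (k.choose 2) * gaussChoose q n k * (x * q) ^ k) (n + 1)
      rw [Finset.sum_range_succ, gaussChoose_eq_zero q (Nat.lt_succ_self n)] at h1
      simp only [mul_zero, zero_mul, add_zero] at h1
      rw [h1]
      congr 1
      · exact Finset.sum_congr rfl fun k _ => by ring
      · simp [gaussChoose_zero_right]
    have h2 : (∑ k ∈ Finset.range (n + 1), q ^ ((k + 1).choose 2) * gaussChoose q n k * x ^ (k + 1))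
        = (∑ k ∈ Finset.range (n + 1), q ^ (k.choose 2) * gaussChoose q n k * (x * q) ^ k) * x := by
      rw [Finset.sum_mul]
      refine Finset.sum_congr rfl fun k _ => ?_
      rw [Nat.choose_succ_succ' k 1, Nat.choose_one_right]
      ring
    have h3 := Finset.sum_range_succ'
      (fun k => q ^ (k.choose 2) * gaussChoose q (n + 1) k * x ^ k) (n + 1)
    simp only [gaussChoose, mul_add, add_mul, Finset.sum_add_distrib] at h3
    rw [h3, h2]
    simp only [Nat.choose_zero_succ, pow_zero, mul_one]
    linear_combination h0

/-- Reversing the sign of the exponents in `(q)_N`; this evaluates the factors with index below `N`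
of the product in the `q`-binomial theorem at `x = -q^{-N}`. -/
lemma prod_one_sub_inv_pow {q : ℂ} (hq : q ≠ 0) (N : ℕ) :
    ∏ i ∈ Finset.range N, (1 - q⁻¹ ^ (i + 1)) =
      (-1) ^ N * q⁻¹ ^ ((N + 1).choose 2) * qPoch q N := by
  induction N with
  | zero => simp [qPoch]
  | succ N ih =>
    rw [Finset.prod_range_succ, ih, qPoch_succ, Nat.choose_succ_succ' (N + 1) 1,
      Nat.choose_one_right]
    have : q⁻¹ ^ (N + 1) * q ^ (N + 1) = 1 := by rw [← mul_pow, inv_mul_cancel₀ hq, one_pow]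
    linear_combination (-(-1) ^ N * q⁻¹ ^ ((N + 1).choose 2) * qPoch q N) * this

/-- The `q`-binomial theorem for `∏_{i ≤ 2N} (1 + x q^i)`, differentiated at its zero
`x = -q^{-N}`. The vanishing of the product itself allows the weight `k` to be shifted to
`k - N`. -/
lemma deriv_identity {q : ℂ} (hq : q ≠ 0) (N : ℕ) :
    ∑ k ∈ Finset.range (2 * N + 2), q ^ (k.choose 2) * gaussChoose q (2 * N + 1) k *
      (((k : ℂ) - N) * (-q⁻¹ ^ N) ^ k) = (-1) ^ (N + 1) * q⁻¹ ^ ((N + 1).choose 2) * qPoch q N ^ 2 := by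
  set x : ℂ := -q⁻¹ ^ N with hx
  have hqN : q⁻¹ ^ N * q ^ N = 1 := by rw [← mul_pow, inv_mul_cancel₀ hq, one_pow]
  -- the product without its factor of index `N`
  let R : ℂ → ℂ := fun y => (∏ i ∈ Finset.range N, (1 + y * q ^ i)) *
    ∏ i ∈ Finset.range N, (1 + y * q ^ (N + 1 + i))
  have hR : R x = (-1) ^ N * q⁻¹ ^ ((N + 1).choose 2) * qPoch q N ^ 2 := by
    have h1 : ∏ i ∈ Finset.range N, (1 + x * q ^ i) =
        ∏ i ∈ Finset.range N, (1 - q⁻¹ ^ (i + 1)) := by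
      rw [← Finset.prod_range_reflect]
      refine Finset.prod_congr rfl fun i hi => ?_
      have hi := Finset.mem_range.mp hi
      have : q⁻¹ ^ N = q⁻¹ ^ (i + 1) * q⁻¹ ^ (N - 1 - i) := by rw [← pow_add]; congr 1; omega
      have h3 : q⁻¹ ^ (N - 1 - i) * q ^ (N - 1 - i) = 1 := by
        rw [← mul_pow, inv_mul_cancel₀ hq, one_pow]
      rw [hx, this]
      linear_combination -q⁻¹ ^ (i + 1) * h3
    have h2 : ∏ i ∈ Finset.range N, (1 + x * q ^ (N + 1 + i)) = qPoch q N := by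
      refine Finset.prod_congr rfl fun i hi => ?_
      rw [hx]
      linear_combination -q ^ (i + 1) * hqN
    simp only [R]
    rw [h1, h2, prod_one_sub_inv_pow hq]
    ring
  have hprod : ∀ y, (1 + y * q ^ N) * R y = ∑ k ∈ Finset.range (2 * N + 2),
      q ^ (k.choose 2) * gaussChoose q (2 * N + 1) k * y ^ k := by
    intro y
    rw [← prod_one_add_mul_pow, show 2 * N + 1 = N + 1 + N by ring, Finset.prod_range_add,
      Finset.prod_range_succ]
    simp only [R]
    ring
  have hRd : DifferentiableAt ℂ R x := by
    simp only [R]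
    fun_prop
  have hd1 : HasDerivAt (fun y => (1 + y * q ^ N) * R y) (q ^ N * R x) x := by
    have h := (((hasDerivAt_id x).mul_const (q ^ N)).const_add 1).mul hRd.hasDerivAt
    convert! h using 1
    simp only [id, hx]
    linear_combination deriv R (-q⁻¹ ^ N) * hqN
  have hd2 : HasDerivAt (fun y => ∑ k ∈ Finset.range (2 * N + 2),
      q ^ (k.choose 2) * gaussChoose q (2 * N + 1) k * y ^ k)
      (∑ k ∈ Finset.range (2 * N + 2),
      q ^ (k.choose 2) * gaussChoose q (2 * N + 1) k * (k * x ^ (k - 1))) x :=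
    HasDerivAt.fun_sum fun k _ => (hasDerivAt_pow k x).const_mul _
  have hE := hd1.unique ((funext hprod) ▸ hd2)
  have h0 := hprod x
  have hx0 : 1 + x * q ^ N = 0 := by rw [hx]; linear_combination -hqN
  rw [hx0, zero_mul] at h0
  calc _ = x * (∑ k ∈ Finset.range (2 * N + 2),
      q ^ (k.choose 2) * gaussChoose q (2 * N + 1) k * (k * x ^ (k - 1))) - N *
        ∑ k ∈ Finset.range (2 * N + 2),
      q ^ (k.choose 2) * gaussChoose q (2 * N + 1) k * x ^ k := by
        rw [Finset.mul_sum, Finset.mul_sum, ← Finset.sum_sub_distrib]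
        refine Finset.sum_congr rfl fun k _ => ?_
        rcases k with _ | k
        · simp; ring
        · simp only [Nat.add_sub_cancel]; ring
    _ = _ := by
      rw [← hE, ← h0, hR]
      linear_combination (-1) ^ N * q⁻¹ ^ ((N + 1).choose 2) * qPoch q N ^ 2 * hx0

lemma one_sub_pow_ne_zero' {q : ℂ} (hq : ‖q‖ < 1) (n : ℕ) : 1 - q ^ (n + 1) ≠ 0 := by
  intro h
  have h1 : ‖q ^ (n + 1)‖ = 1 := by rw [← sub_eq_zero.mp h, norm_one]
  rw [norm_pow] at h1
  exact (pow_lt_one₀ (norm_nonneg q) hq n.succ_ne_zero).ne h1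

lemma qPoch_ne_zero {q : ℂ} (hq : ‖q‖ < 1) (n : ℕ) : qPoch q n ≠ 0 :=
  Finset.prod_ne_zero_iff.mpr fun i _ => one_sub_pow_ne_zero' hq i

lemma pow_mul_inv_pow {q : ℂ} (hq : q ≠ 0) {a b c d : ℕ} (h : a + d = c + b) :
    q ^ a * q⁻¹ ^ b = q ^ c * q⁻¹ ^ d := by
  rw [inv_pow, inv_pow, ← div_eq_mul_inv, ← div_eq_mul_inv,
    div_eq_div_iff (pow_ne_zero _ hq) (pow_ne_zero _ hq), ← pow_add, ← pow_add, h]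

/-- The finite form of Jacobi's identity. -/
lemma finite_jacobi {q : ℂ} (hq : q ≠ 0) (hq1 : ‖q‖ < 1) (N : ℕ) :
    qPoch q N ^ 2 = ∑ k ∈ Finset.range (N + 1), (-1) ^ k * (2 * k + 1) * q ^ ((k + 1).choose 2) *
      (qPoch q (2 * N + 1) / (qPoch q (N - k) * qPoch q (N + k + 1))) := by
  have h := deriv_identity hq N
  -- the terms of `deriv_identity` with indices `N - k` and `N + 1 + k` carry the same power of `q`
  have e1 : ∀ k ∈ Finset.range (N + 1),
      q ^ ((N - k).choose 2) * gaussChoose q (2 * N + 1) (N - k) *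
      ((((N - k : ℕ) : ℂ) - N) * (-q⁻¹ ^ N) ^ (N - k)) = (-1) ^ (N + 1) * q⁻¹ ^ ((N + 1).choose 2) *
      ((-1) ^ k * k * q ^ ((k + 1).choose 2) *
      (qPoch q (2 * N + 1) / (qPoch q (N - k) * qPoch q (N + k + 1)))) := by
    intro k hk
    obtain ⟨m, rfl⟩ := Nat.exists_eq_add_of_le (Nat.lt_succ_iff.mp (Finset.mem_range.mp hk))
    have hg := gaussChoose_mul_qPoch q (k + m + k + 1) m
    rw [show k + m + k + 1 + m = 2 * (k + m) + 1 by ring] at hg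
    rw [Nat.add_sub_cancel_left, ← hg]
    have hc : m.choose 2 + (k + m + 1).choose 2 = (k + 1).choose 2 + (k + m) * m := by
      have : ((m.choose 2 + (k + m + 1).choose 2 : ℕ) : ℚ) =
          ((k + 1).choose 2 + (k + m) * m : ℕ) := by
        push_cast [Nat.cast_choose_two]
        ring
      exact_mod_cast this
    have hp := pow_mul_inv_pow hq hc
    have := qPoch_ne_zero hq1 m
    have := qPoch_ne_zero hq1 (k + m + k + 1)
    rw [mul_comm (qPoch q m), mul_div_assoc, div_self (by positivity), neg_pow, ← pow_mul]
    have hs : ((-1 : ℂ)) ^ (k + m + 1) * (-1) ^ k = - (-1) ^ m := by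
      rw [← pow_add, show k + m + 1 + k = 2 * k + (m + 1) by ring, pow_add, pow_mul]
      simp [pow_succ]
    push_cast
    linear_combination (-k * gaussChoose q (2 * (k + m) + 1) m * (-1) ^ m) * hp -
      k * gaussChoose q (2 * (k + m) + 1) m * q ^ ((k + 1).choose 2) *
        q⁻¹ ^ ((k + m + 1).choose 2) * hs
  have e2 : ∀ k ∈ Finset.range (N + 1),
      q ^ ((N + 1 + k).choose 2) * gaussChoose q (2 * N + 1) (N + 1 + k) *
      ((((N + 1 + k : ℕ) : ℂ) - N) * (-q⁻¹ ^ N) ^ (N + 1 + k)) =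
      (-1) ^ (N + 1) * q⁻¹ ^ ((N + 1).choose 2) *
      ((-1) ^ k * (k + 1) * q ^ ((k + 1).choose 2) *
      (qPoch q (2 * N + 1) / (qPoch q (N - k) * qPoch q (N + k + 1)))) := by
    intro k hk
    obtain ⟨m, rfl⟩ := Nat.exists_eq_add_of_le (Nat.lt_succ_iff.mp (Finset.mem_range.mp hk))
    have hg := gaussChoose_mul_qPoch q m (k + m + k + 1)
    rw [show m + (k + m + k + 1) = 2 * (k + m) + 1 by ring] at hg
    rw [Nat.add_sub_cancel_left, ← hg, show k + m + 1 + k = k + m + k + 1 by ring]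
    have hc : (k + m + k + 1).choose 2 + (k + m + 1).choose 2 =
        (k + 1).choose 2 + (k + m) * (k + m + k + 1) := by
      have : (((k + m + k + 1).choose 2 + (k + m + 1).choose 2 : ℕ) : ℚ) =
          ((k + 1).choose 2 + (k + m) * (k + m + k + 1) : ℕ) := by
        push_cast [Nat.cast_choose_two]
        ring
      exact_mod_cast this
    have hp := pow_mul_inv_pow hq hc
    have := qPoch_ne_zero hq1 m
    have := qPoch_ne_zero hq1 (k + m + k + 1)
    rw [mul_div_assoc, div_self (by positivity), neg_pow, ← pow_mul]
    push_cast
    linear_combination ((k + 1) * gaussChoose q (2 * (k + m) + 1) (k + m + k + 1) *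
      (-1) ^ (k + m + k + 1)) * hp
  rw [show 2 * N + 2 = N + 1 + (N + 1) by ring, Finset.sum_range_add, ← Finset.sum_range_reflect,
    Nat.add_sub_cancel, Finset.sum_congr rfl e1, Finset.sum_congr rfl e2,
    ← Finset.mul_sum, ← Finset.mul_sum, ← mul_add, ← Finset.sum_add_distrib] at h
  have hne : (-1 : ℂ) ^ (N + 1) * q⁻¹ ^ ((N + 1).choose 2) ≠ 0 :=
    mul_ne_zero (pow_ne_zero _ (by norm_num)) (pow_ne_zero _ (inv_ne_zero hq))
  rw [← mul_left_cancel₀ hne h]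
  exact Finset.sum_congr rfl fun k _ => by ring

/-! ### Jacobi's identity for the cube of the Euler product -/

open Filter Topology in
/-- Jacobi's identity `∏ (1 - qⁿ)³ = ∑_{k ≥ 0} (-1)ᵏ (2k + 1) q^{k(k+1)/2}`. -/
lemma jacobi_cube {q : ℂ} (hq : q ≠ 0) (hq1 : ‖q‖ < 1) :
    HasSum (fun k : ℕ => (-1) ^ k * (2 * k + 1) * q ^ ((k + 1).choose 2))
      ((∏' n : ℕ, (1 - q ^ (n + 1))) ^ 3) := by
  set P : ℂ := ∏' n : ℕ, (1 - q ^ (n + 1)) with hP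
  have hlim : Tendsto (qPoch q) atTop (𝓝 P) :=
    (ModularForm.multipliable_one_sub_pow hq1).hasProd.tendsto_prod_nat
  have hP0 : P ≠ 0 := by
    have := tprod_one_add_ne_zero_of_summable (f := fun n : ℕ => -q ^ (n + 1))
      (fun i => by simpa [← sub_eq_add_neg] using one_sub_pow_ne_zero' hq1 i)
      (by
        simpa using (summable_nat_add_iff (G := ℝ) 1).mpr
          (summable_geometric_of_lt_one (norm_nonneg _) hq1))
    simpa [← sub_eq_add_neg] using this
  obtain ⟨A, hA⟩ := hlim.norm.bddAbove_range
  obtain ⟨B, hB⟩ := (hlim.inv₀ hP0).norm.bddAbove_range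
  have hA : ∀ n, ‖qPoch q n‖ ≤ A := fun n => hA ⟨n, rfl⟩
  have hB : ∀ n, ‖(qPoch q n)⁻¹‖ ≤ B := fun n => hB ⟨n, rfl⟩
  have hA0 := (norm_nonneg _).trans (hA 0)
  have hB0 := (norm_nonneg _).trans (hB 0)
  have hsum : Summable (fun k : ℕ => ‖(-1) ^ k * (2 * (k : ℂ) + 1) * q ^ ((k + 1).choose 2)‖) := by
    have h1 := (summable_pow_mul_geometric_of_norm_lt_one 1
      (show ‖(‖q‖ : ℝ)‖ < 1 by simpa using hq1)).mul_left 2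
    have h2 := summable_geometric_of_lt_one (norm_nonneg _) hq1
    refine Summable.of_nonneg_of_le (fun _ => norm_nonneg _) (fun k => ?_) (h1.add h2)
    have h3 : k ≤ (k + 1).choose 2 := by
      rw [Nat.choose_succ_succ' k 1, Nat.choose_one_right]; omega
    have h4 : ‖q‖ ^ ((k + 1).choose 2) ≤ ‖q‖ ^ k :=
      pow_le_pow_of_le_one (norm_nonneg _) hq1.le h3
    have h5 : ‖2 * (k : ℂ) + 1‖ = 2 * k + 1 := by
      exact_mod_cast Complex.norm_natCast (2 * k + 1)
    rw [norm_mul, norm_mul, norm_pow, norm_neg, norm_one, one_pow, one_mul, norm_pow, h5]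
    calc _ ≤ (2 * (k : ℝ) + 1) * ‖q‖ ^ k := by gcongr
      _ = _ := by ring
  -- each ratio `(q)_{2N+1} / ((q)_{N-k} (q)_{N+k+1})` tends to `1 / P` and is bounded by `A B²`
  have hT := tendsto_tsum_of_dominated_convergence (𝓕 := atTop)
    (f := fun (N : ℕ) (k : ℕ) => if k ∈ Finset.range (N + 1) then
      (-1) ^ k * (2 * (k : ℂ) + 1) * q ^ ((k + 1).choose 2) *
      (qPoch q (2 * N + 1) / (qPoch q (N - k) * qPoch q (N + k + 1))) else 0)
    (g := fun k : ℕ => (-1) ^ k * (2 * (k : ℂ) + 1) * q ^ ((k + 1).choose 2) * (P / (P * P)))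
    (hsum.mul_right (A * (B * B))) (fun k => by
      have hk : Tendsto (fun N : ℕ => (-1) ^ k * (2 * (k : ℂ) + 1) * q ^ ((k + 1).choose 2) *
          (qPoch q (2 * N + 1) / (qPoch q (N - k) * qPoch q (N + k + 1)))) atTop
          (𝓝 ((-1) ^ k * (2 * (k : ℂ) + 1) * q ^ ((k + 1).choose 2) * (P / (P * P)))) := by
        refine Tendsto.const_mul _ (Tendsto.div ?_ (Tendsto.mul ?_ ?_) (mul_ne_zero hP0 hP0))
        · exact hlim.comp (tendsto_atTop_mono (fun n => by simp only [id]; omega) tendsto_id)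
        · exact hlim.comp (tendsto_sub_atTop_nat k)
        · exact hlim.comp (tendsto_atTop_mono (fun n => by simp only [id]; omega) tendsto_id)
      refine hk.congr' ?_
      filter_upwards [eventually_ge_atTop k] with N hN
      rw [if_pos (Finset.mem_range.mpr (by omega))])
    (.of_forall fun N k => by
      split_ifs
      · rw [norm_mul, div_eq_mul_inv, mul_inv, norm_mul (qPoch q _), norm_mul _⁻¹]
        gcongr
        exacts [hA _, hB _, hB _]
      · rw [norm_zero]
        positivity)
  have hT' : Tendsto (fun N => qPoch q N ^ 2) atTop
      (𝓝 (∑' k : ℕ, (-1) ^ k * (2 * (k : ℂ) + 1) * q ^ ((k + 1).choose 2) * (P / (P * P)))) := by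
    refine hT.congr fun N => ?_
    rw [finite_jacobi hq hq1 N, tsum_eq_sum (s := Finset.range (N + 1))
      (fun k hk => if_neg hk)]
    exact Finset.sum_congr rfl fun k hk => if_pos hk
  have hU := tendsto_nhds_unique (hlim.pow 2) hT'
  rw [tsum_mul_right] at hU
  have : P ^ 3 = ∑' k : ℕ, (-1) ^ k * (2 * (k : ℂ) + 1) * q ^ ((k + 1).choose 2) := by
    rw [pow_succ, hU]
    field_simp
  rw [this]
  exact hsum.of_norm.hasSum

/-- Jacobi's identity as a sum over all integers, with `q = y²`. -/
lemma jacobi_cube_int {y : ℂ} (hy : y ≠ 0) (hy1 : ‖y‖ < 1) :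
    HasSum (fun k : ℤ => (-1 : ℂ) ^ k * (2 * k + 1) * y ^ (k * (k + 1)))
      (2 * (∏' n : ℕ, (1 - (y ^ 2) ^ (n + 1))) ^ 3) := by
  have h := jacobi_cube (pow_ne_zero 2 hy) (by
    rw [norm_pow]; exact pow_lt_one₀ (norm_nonneg y) hy1 two_ne_zero)
  have hc : ∀ k : ℕ, (y ^ 2) ^ ((k + 1).choose 2) = y ^ ((k : ℤ) * (k + 1)) := by
    intro k
    have : 2 * (k + 1).choose 2 = k * (k + 1) := by
      have : ((2 * (k + 1).choose 2 : ℕ) : ℚ) = (k * (k + 1) : ℕ) := by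
        push_cast [Nat.cast_choose_two]
        ring
      exact_mod_cast this
    rw [← pow_mul, this, ← zpow_natCast]
    push_cast
    rfl
  simp only [hc] at h
  rw [two_mul]
  refine HasSum.of_nat_of_neg_add_one ?_ ?_
  · convert! h using 2
  · convert! h using 2 with k
    rw [show -((k : ℤ) + 1) * (-((k : ℤ) + 1) + 1) = k * (k + 1) by ring, zpow_neg,
      zpow_add₀ (by norm_num), zpow_natCast]
    have : ((-1 : ℂ) ^ k)⁻¹ = (-1) ^ k := by rw [← inv_pow]; norm_num
    rw [zpow_one, mul_inv, this]
    push_cast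
    norm_num
    ring

/-! ### Rearranging the double series -/

lemma summable_int_pow_mul_zpow {q : ℂ} (hq1 : ‖q‖ < 1) (i : ℕ) :
    Summable (fun m : ℤ => ‖(m : ℂ) ^ i * q ^ (m ^ 2)‖) := by
  have h : Summable (fun m : ℕ => ‖(m : ℂ) ^ i * q ^ ((m : ℤ) ^ 2)‖) := by
    refine Summable.of_nonneg_of_le (fun _ => norm_nonneg _) (fun m => ?_)
      (summable_pow_mul_geometric_of_norm_lt_one i (show ‖(‖q‖ : ℝ)‖ < 1 by simpa using hq1))
    rw [norm_mul, norm_pow, Complex.norm_natCast, norm_zpow,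
      show (m : ℤ) ^ 2 = ((m ^ 2 : ℕ) : ℤ) by push_cast; rfl, zpow_natCast]
    exact mul_le_mul_of_nonneg_left (pow_le_pow_of_le_one (norm_nonneg _) hq1.le
      (Nat.le_self_pow two_ne_zero m)) (by positivity)
  refine Summable.of_nat_of_neg (by simpa using h) ?_
  simpa using h

/-- Absolute convergence of the theta series with monomial weights. -/
lemma summable_monomial_theta {q : ℂ} (hq : q ≠ 0) (hq1 : ‖q‖ < 1) (i j : ℕ) :
    Summable (fun p : ℤ × ℤ => (p.1 : ℂ) ^ i * (p.2 : ℂ) ^ j * q ^ (p.1 ^ 2 + 3 * p.2 ^ 2)) := by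
  have h3 : ‖q ^ 3‖ < 1 := by
    rw [norm_pow]; exact pow_lt_one₀ (norm_nonneg q) hq1 three_ne_zero
  have h := summable_mul_of_summable_norm (summable_int_pow_mul_zpow hq1 i)
    (summable_int_pow_mul_zpow h3 j)
  refine h.congr fun p => ?_
  rw [zpow_add₀ hq, zpow_mul, show q ^ (3 : ℤ) = q ^ 3 from zpow_natCast q 3]
  ring

/-- Splitting a sum over `ℤ²` according to the parity of the difference of the coordinates. -/
lemma tsum_parity_split {f : ℤ × ℤ → ℂ} (hf : Summable f) :
    ∑' p, f p = ∑' p : ℤ × ℤ, f (2 * p.1 + p.2, p.2) + ∑' p : ℤ × ℤ, f (2 * p.1 + 1 + p.2, p.2) := by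
  have hi0 : Function.Injective (fun p : ℤ × ℤ => (2 * p.1 + p.2, p.2)) := by
    rintro ⟨a, b⟩ ⟨c, d⟩ h
    simp only [Prod.mk.injEq] at h ⊢
    omega
  have hi1 : Function.Injective (fun p : ℤ × ℤ => (2 * p.1 + 1 + p.2, p.2)) := by
    rintro ⟨a, b⟩ ⟨c, d⟩ h
    simp only [Prod.mk.injEq] at h ⊢
    omega
  have h0 := hi0.hasSum_range_iff.mpr (hf.comp_injective hi0).hasSum
  have h1 := hi1.hasSum_range_iff.mpr (hf.comp_injective hi1).hasSum
  refine (h0.add_isCompl ?_ h1).tsum_eq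
  rw [← eq_compl_iff_isCompl]
  ext ⟨m, n⟩
  simp only [Set.mem_compl_iff, Set.mem_range, Prod.mk.injEq, Prod.exists, not_exists, not_and]
  constructor
  · rintro ⟨a, b, h, rfl⟩ c d h1 h2
    omega
  · intro h
    have := h ((m - n) / 2) n
    exact ⟨(m - n) / 2, n, by omega, rfl⟩

/-- The order-three rotation `(l, n) ↦ (n, -l - n)` of `ℤ²`, which preserves the norm form
`l² + l n + n²` of the Eisenstein integers. -/
def rotEquiv : ℤ × ℤ ≃ ℤ × ℤ where
  toFun p := (p.2, -p.1 - p.2)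
  invFun p := (-p.1 - p.2, p.1)
  left_inv p := by
    ext
    · dsimp only; ring
    · rfl
  right_inv p := by
    ext
    · rfl
    · dsimp only; ring

/-- The weight `l² + 2 l n` averages to zero over the orbits of the rotation, so the corresponding
theta series vanishes. -/
lemma tsum_even_part (g : ℤ × ℤ → ℂ) (hg : Summable g) (q : ℂ)
    (h : ∀ p, g p = 2 * (p.1 ^ 2 + 2 * p.1 * p.2) * q ^ (4 * (p.1 ^ 2 + p.1 * p.2 + p.2 ^ 2))) :
    ∑' p, g p = 0 := by
  have h1 := rotEquiv.tsum_eq g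
  have h2 := rotEquiv.tsum_eq (fun p => g (rotEquiv p))
  have s1 : Summable (fun p => g (rotEquiv p)) := (rotEquiv.summable_iff (f := g)).mpr hg
  have s2 : Summable (fun p => g (rotEquiv (rotEquiv p))) :=
    (rotEquiv.summable_iff (f := fun p => g (rotEquiv p))).mpr s1
  have h3 : ∑' p, (g p + g (rotEquiv p) + g (rotEquiv (rotEquiv p))) = 0 := by
    rw [← tsum_zero (α := ℂ) (β := ℤ × ℤ)]
    refine tsum_congr fun p => ?_
    rw [h, h, h]
    obtain ⟨l, n⟩ := p
    simp only [rotEquiv, Equiv.coe_fn_mk]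
    rw [show n ^ 2 + n * (-l - n) + (-l - n) ^ 2 = l ^ 2 + l * n + n ^ 2 by ring,
      show (-l - n) ^ 2 + (-l - n) * (-n - (-l - n)) + (-n - (-l - n)) ^ 2 =
        l ^ 2 + l * n + n ^ 2 by ring]
    push_cast
    ring
  rw [(hg.add s1).tsum_add s2, hg.tsum_add s1, h2, h1] at h3
  linear_combination h3 / 3

/-- The bijection `(a, l) ↦ (a + l, -1 - l)` of `ℤ²`. In the coordinates `k = 2a + l` on the class
`k ≡ l` mod 2 and `k = 2a + 1 + l` on the class `k ≢ l`, it is the reflection `l ↦ -1 - l`. -/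
def shearEquiv : ℤ × ℤ ≃ ℤ × ℤ where
  toFun p := (p.1 + p.2, -1 - p.2)
  invFun p := (p.1 + p.2 + 1, -1 - p.2)
  left_inv p := by ext <;> (dsimp only; ring)
  right_inv p := by ext <;> (dsimp only; ring)

/-- The identity with `q` as the variable; the products are `∏ (1 - q^{2n})` and `∏ (1 - q^{6n})`. -/
lemma theta_identity {q : ℂ} (hq : q ≠ 0) (hq1 : ‖q‖ < 1) :
    q * (∏' n : ℕ, (1 - (q ^ 2) ^ (n + 1))) ^ 3 * (∏' n : ℕ, (1 - ((q ^ 3) ^ 2) ^ (n + 1))) ^ 3 =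
      ∑' p : ℤ × ℤ, (((p.1 : ℂ) ^ 2 - 3 * (p.2 : ℂ) ^ 2) / 2) * q ^ (p.1 ^ 2 + 3 * p.2 ^ 2) := by
  have h3 : ‖q ^ 3‖ < 1 := by
    rw [norm_pow]; exact pow_lt_one₀ (norm_nonneg q) hq1 three_ne_zero
  have j1 := jacobi_cube_int hq hq1
  have j2 := jacobi_cube_int (pow_ne_zero 3 hq) h3
  have s20 := summable_monomial_theta hq hq1 2 0
  have s11 := summable_monomial_theta hq hq1 1 1
  have s02 := summable_monomial_theta hq hq1 0 2
  simp only [pow_zero, mul_one, one_mul, pow_one] at s20 s11 s02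
  -- the product of the two Jacobi series
  let A : ℤ × ℤ → ℂ := fun p => (-1 : ℂ) ^ (p.1 + p.2) * (2 * p.1 + 1) * (2 * p.2 + 1) *
    q ^ (1 + p.1 * (p.1 + 1) + 3 * (p.2 * (p.2 + 1)))
  have hAeq : ∀ p : ℤ × ℤ, q * ((-1 : ℂ) ^ p.1 * (2 * p.1 + 1) * q ^ (p.1 * (p.1 + 1)) *
      ((-1 : ℂ) ^ p.2 * (2 * p.2 + 1) * (q ^ 3) ^ (p.2 * (p.2 + 1)))) = A p := by
    intro p
    simp only [A]
    rw [zpow_add₀ hq, zpow_add₀ hq, zpow_mul q 3, zpow_one,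
      show q ^ (3 : ℤ) = q ^ 3 from zpow_natCast q 3, zpow_add₀ (by norm_num)]
    ring
  have sA' := summable_mul_of_summable_norm j1.summable.norm j2.summable.norm
  have sA : Summable A := (sA'.mul_left q).congr hAeq
  have tA : ∑' p, A p = 4 * (q * (∏' n : ℕ, (1 - (q ^ 2) ^ (n + 1))) ^ 3 *
      (∏' n : ℕ, (1 - ((q ^ 3) ^ 2) ^ (n + 1))) ^ 3) := by
    rw [← tsum_congr hAeq, tsum_mul_left, (j1.mul j2 sA').tsum_eq]
    ring
  -- the weight `m² - 3n²` is completed to `(m + 3n)(m - n)`; the added `2mn` sums to zero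
  let h : ℤ × ℤ → ℂ := fun p => (((p.1 : ℂ) ^ 2 + 2 * p.1 * p.2 - 3 * (p.2 : ℂ) ^ 2) / 2) *
    q ^ (p.1 ^ 2 + 3 * p.2 ^ 2)
  have sh : Summable h := (((s20.mul_left (1 / 2)).add s11).add (s02.mul_left (-3 / 2))).congr
    fun p => by simp only [h]; ring
  have hodd : ∑' p : ℤ × ℤ, ((p.1 : ℂ) * p.2 * q ^ (p.1 ^ 2 + 3 * p.2 ^ 2)) = 0 := by
    have := (Equiv.prodCongr (Equiv.neg ℤ) (Equiv.refl ℤ)).tsum_eq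
      (fun p : ℤ × ℤ => ((p.1 : ℂ) * p.2 * q ^ (p.1 ^ 2 + 3 * p.2 ^ 2)))
    simp only [Equiv.prodCongr_apply, Prod.map_fst, Prod.map_snd, Equiv.neg_apply,
      Equiv.refl_apply, Int.cast_neg, neg_sq, neg_mul, tsum_neg] at this
    linear_combination -this / 2
  have hF : ∑' p : ℤ × ℤ, (((p.1 : ℂ) ^ 2 - 3 * (p.2 : ℂ) ^ 2) / 2) *
      q ^ (p.1 ^ 2 + 3 * p.2 ^ 2) = ∑' p, h p := by
    rw [← sub_zero (∑' p, h p), ← hodd, ← sh.tsum_sub s11]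
    refine tsum_congr fun p => ?_
    simp only [h]
    ring
  have hi0 : Function.Injective (fun p : ℤ × ℤ => (2 * p.1 + p.2, p.2)) := by
    rintro ⟨a, b⟩ ⟨c, d⟩ h
    simp only [Prod.mk.injEq] at h ⊢
    omega
  have heven : ∑' p : ℤ × ℤ, h (2 * p.1 + p.2, p.2) = 0 := by
    refine tsum_even_part _ (sh.comp_injective hi0) (q := q) (fun p => ?_)
    simp only [h]
    rw [show (2 * p.1 + p.2) ^ 2 + 3 * p.2 ^ 2 = 4 * (p.1 ^ 2 + p.1 * p.2 + p.2 ^ 2) by ring]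
    push_cast
    ring
  have hsign : ∀ k : ℤ, (-1 : ℂ) ^ (2 * k) = 1 := fun k => (even_two_mul k).neg_one_zpow
  -- both parity classes of the product series have the same sum
  have hA1 : ∑' p : ℤ × ℤ, A (2 * p.1 + 1 + p.2, p.2) = ∑' p : ℤ × ℤ, A (2 * p.1 + p.2, p.2) := by
    rw [← shearEquiv.tsum_eq]
    refine tsum_congr fun p => ?_
    simp only [shearEquiv, Equiv.coe_fn_mk, A]
    rw [show 2 * (p.1 + p.2) + 1 + (-1 - p.2) + (-1 - p.2) = 2 * p.1 - 1 by ring,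
      show 2 * p.1 + p.2 + p.2 = 2 * (p.1 + p.2) by ring, zpow_sub₀ (by norm_num), hsign, hsign]
    rw [show 1 + (2 * (p.1 + p.2) + 1 + (-1 - p.2)) * (2 * (p.1 + p.2) + 1 + (-1 - p.2) + 1) +
      3 * ((-1 - p.2) * (-1 - p.2 + 1)) = 1 + (2 * p.1 + p.2) * (2 * p.1 + p.2 + 1) +
      3 * (p.2 * (p.2 + 1)) by ring]
    push_cast
    rw [zpow_one]
    ring
  -- substituting `m = 2l + 1 + n`, `k = l + 2n`, that is `2l + 1 = m - n`, `2k + 1 = m + 3n`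
  have hmatch : ∑' p : ℤ × ℤ, h (2 * p.1 + 1 + p.2, p.2) =
      (1 / 2) * ∑' p : ℤ × ℤ, A (2 * p.1 + p.2, p.2) := by
    rw [← tsum_mul_left, ← (Equiv.prodComm ℤ ℤ).tsum_eq]
    refine tsum_congr fun p => ?_
    simp only [h, A, Equiv.prodComm_apply, Prod.fst_swap, Prod.snd_swap]
    rw [show 2 * p.1 + p.2 + p.2 = 2 * (p.1 + p.2) by ring, hsign,
      show (2 * p.2 + 1 + p.1) ^ 2 + 3 * p.1 ^ 2 = 1 + (2 * p.1 + p.2) * (2 * p.1 + p.2 + 1) +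
      3 * (p.2 * (p.2 + 1)) by ring]
    push_cast
    ring
  have hA2 := tsum_parity_split sA
  rw [hF, tsum_parity_split sh, heven, hmatch]
  rw [hA1, tA] at hA2
  linear_combination hA2 / 4

/-! ### The identity for the eta function -/

theorem eta_g_theta (τ : ℂ) (hτ : 0 < τ.im) :
    Summable (fun p : ℤ × ℤ =>
      (((p.1 : ℂ) ^ 2 - 3 * (p.2 : ℂ) ^ 2) / 2) *
        Complex.exp (2 * (Real.pi : ℂ) * Complex.I * τ) ^ (p.1 ^ 2 + 3 * p.2 ^ 2)) ∧
    dedekindEta (2 * τ) ^ 3 * dedekindEta (6 * τ) ^ 3 =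
      ∑' p : ℤ × ℤ,
        (((p.1 : ℂ) ^ 2 - 3 * (p.2 : ℂ) ^ 2) / 2) *
          Complex.exp (2 * (Real.pi : ℂ) * Complex.I * τ) ^ (p.1 ^ 2 + 3 * p.2 ^ 2) := by
  have hq1 : ‖Complex.exp (2 * (Real.pi : ℂ) * Complex.I * τ)‖ < 1 :=
    UpperHalfPlane.norm_exp_two_pi_I_lt_one ⟨τ, hτ⟩
  have hq := Complex.exp_ne_zero (2 * (Real.pi : ℂ) * Complex.I * τ)
  constructor
  · refine (((summable_monomial_theta hq hq1 2 0).mul_left (1 / 2)).add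
      ((summable_monomial_theta hq hq1 0 2).mul_left (-3 / 2))).congr fun p => ?_
    ring
  · rw [← theta_identity hq hq1]
    have e2 : Complex.exp (2 * (Real.pi : ℂ) * Complex.I * (2 * τ)) =
        Complex.exp (2 * (Real.pi : ℂ) * Complex.I * τ) ^ 2 := by
      rw [← Complex.exp_nat_mul]; congr 1; push_cast; ring
    have e6 : Complex.exp (2 * (Real.pi : ℂ) * Complex.I * (6 * τ)) =
        (Complex.exp (2 * (Real.pi : ℂ) * Complex.I * τ) ^ 3) ^ 2 := by
      rw [← pow_mul, ← Complex.exp_nat_mul]; congr 1; push_cast; ring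
    -- the fractional powers of `q` multiply to `q^{3 (2 + 6) / 24} = q`
    have e1 : Complex.exp (2 * (Real.pi : ℂ) * Complex.I * (2 * τ) / 24) ^ 3 *
        Complex.exp (2 * (Real.pi : ℂ) * Complex.I * (6 * τ) / 24) ^ 3 =
        Complex.exp (2 * (Real.pi : ℂ) * Complex.I * τ) := by
      rw [← Complex.exp_nat_mul, ← Complex.exp_nat_mul, ← Complex.exp_add]
      congr 1; push_cast; ring
    simp only [dedekindEta]
    rw [e2, e6, mul_pow, mul_pow, mul_mul_mul_comm, e1, ← mul_assoc _ _ (_ ^ 3)]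
end
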